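/- arXiv:1810.11342 — 7 statements merged into one kernel-verified Lean document; each statement's English description precedes it below -/
import Mathlib

section
/- Let n ≥ 2 and 1 ≤ ν ≤ n−1. Let P ∈ ℂ[z₁,…,zₙ] be a polynomial that can be written as P = P₁ + P₂, where P₁ ∈ ℂ[z₁,…,z_ν] and P₂ ∈ ℂ[z_{ν+1},…,zₙ] are nonconstant polynomials depending on disjoint sets of variables. If gcd(deg P₁, deg P₂) = 1, then P is irreducible over ℂ. -/
/-!
Write `p = deg P₁`, `q = deg P₂`, and give weight `q` to the first block of variables and weight
`p` to the second. Then `P` has weighted degree at most `p * q`. Suppose `P = A * B`.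

Setting the second block to zero turns `P` into `P₁ + const`, so the degrees `i`, `i'` of the
restrictions of `A`, `B` to the first block satisfy `i + i' = p`; likewise `j + j' = q` for the
second block. A monomial of degree `i` in the first block has weight `q * i`, so the weighted
degrees `a`, `b` of `A`, `B` satisfy `a ≥ q * i, p * j` and `b ≥ q * i', p * j'`. Over a domain the
weighted degree is additive, so `a + b ≤ p * q = q * i + q * i' = p * j + p * j'`, which forces
`a = q * i = p * j`. By coprimality `p ∣ i ≤ p`, hence `i = 0` or `i = p`, i.e. `a = 0` or `b = 0`,
and a nonzero polynomial of weighted degree `0` for positive weights is a unit.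

Additivity of the weighted degree is obtained by grading: under `X i ↦ X i * T ^ w i` the weighted
degree becomes the degree in `T` over the domain `K[X]` (`grade`, `natDegree_grade_mul`). The
arithmetic is in `eq_zero_of_degree_bounds`.
-/

namespace DisjointVars

open MvPolynomial

variable {σ K : Type*} [Field K]

/-- The algebra map `X i ↦ X i * T ^ w i` into polynomials in `T` over `K[X]`. The coefficient of
`T ^ k` is the weighted homogeneous component of weight `k`, so `(grade w f).natDegree` is the
weighted degree of `f`. -/
noncomputable def grade (w : σ → ℕ) :
    MvPolynomial σ K →ₐ[K] Polynomial (MvPolynomial σ K) :=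
  aeval fun i => Polynomial.C (X i) * Polynomial.X ^ w i

lemma grade_monomial (w : σ → ℕ) (d : σ →₀ ℕ) (r : K) :
    grade w (monomial d r) = Polynomial.monomial (Finsupp.weight w d) (monomial d r) := by
  rw [grade, aeval_monomial, ← Polynomial.C_mul_X_pow_eq_monomial, monomial_eq, map_mul,
    Finsupp.weight_apply, Finsupp.prod, Finsupp.prod, Finsupp.sum]
  simp only [mul_pow, Finset.prod_mul_distrib, ← pow_mul, Finset.prod_pow_eq_pow_sum, map_prod,
    map_pow, smul_eq_mul, mul_comm (w _)]
  rw [mul_assoc]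
  rfl

lemma coeff_grade (w : σ → ℕ) (f : MvPolynomial σ K) (d : σ →₀ ℕ) (k : ℕ) :
    coeff d ((grade w f).coeff k) = if Finsupp.weight w d = k then coeff d f else 0 := by
  classical
  induction f using MvPolynomial.induction_on' with
  | monomial e r =>
    rw [grade_monomial, Polynomial.coeff_monomial]
    by_cases hed : e = d
    · subst hed
      split_ifs <;> simp
    · split_ifs <;> simp [coeff_monomial, hed]
  | add f g hf hg =>
    rw [map_add, Polynomial.coeff_add, coeff_add, hf, hg, coeff_add]
    split_ifs <;> simp

lemma weight_le_natDegree_grade (w : σ → ℕ) {f : MvPolynomial σ K} {d : σ →₀ ℕ}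
    (hd : d ∈ f.support) : Finsupp.weight w d ≤ (grade w f).natDegree := by
  apply Polynomial.le_natDegree_of_ne_zero
  intro h
  have := coeff_grade w f d (Finsupp.weight w d)
  rw [h, if_pos rfl, coeff_zero] at this
  exact mem_support_iff.mp hd this.symm

lemma natDegree_grade_le (w : σ → ℕ) {f : MvPolynomial σ K} {N : ℕ}
    (h : ∀ d ∈ f.support, Finsupp.weight w d ≤ N) : (grade w f).natDegree ≤ N := by
  rw [Polynomial.natDegree_le_iff_coeff_eq_zero]
  intro k hk
  ext d
  rw [coeff_grade, coeff_zero]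
  split_ifs with hd
  · by_contra hc
    have := h d (mem_support_iff.mpr hc)
    omega
  · rfl

lemma grade_ne_zero (w : σ → ℕ) {f : MvPolynomial σ K} (hf : f ≠ 0) : grade w f ≠ 0 := by
  obtain ⟨d, hd⟩ := MvPolynomial.ne_zero_iff.mp hf
  intro h
  have := coeff_grade w f d (Finsupp.weight w d)
  rw [h, if_pos rfl, Polynomial.coeff_zero, coeff_zero] at this
  exact hd this.symm

lemma natDegree_grade_mul (w : σ → ℕ) {f g : MvPolynomial σ K} (hf : f ≠ 0) (hg : g ≠ 0) :
    (grade w (f * g)).natDegree = (grade w f).natDegree + (grade w g).natDegree := by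
  rw [map_mul, Polynomial.natDegree_mul (grade_ne_zero w hf) (grade_ne_zero w hg)]

lemma isUnit_of_natDegree_grade_eq_zero (w : σ → ℕ) (hw : ∀ i, 0 < w i)
    {f : MvPolynomial σ K} (hf : f ≠ 0) (h : (grade w f).natDegree = 0) : IsUnit f := by
  have h0 : f.totalDegree = 0 := by
    rw [totalDegree_eq_zero_iff]
    intro m hm i
    have h1 := weight_le_natDegree_grade w hm
    have h2 := Finsupp.le_weight w (hw i).ne' m
    omega
  rw [totalDegree_eq_zero_iff_eq_C] at h0
  rw [h0] at hf ⊢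
  exact (isUnit_iff_ne_zero.mpr fun hc => hf (by rw [hc, map_zero])).map C

open Classical in
/-- The restriction of a polynomial to the coordinate subspace where all variables outside `S`
vanish. -/
noncomputable def restr (S : σ → Prop) : MvPolynomial σ K →ₐ[K] MvPolynomial σ K :=
  aeval fun i => if S i then X i else 0

open Classical in
lemma coeff_restr (S : σ → Prop) (f : MvPolynomial σ K) (d : σ →₀ ℕ) :
    coeff d (restr S f) = if ∀ i, ¬ S i → d i = 0 then coeff d f else 0 := by
  induction f using MvPolynomial.induction_on' with
  | monomial e r =>
    have key : restr S (monomial e r) =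
        if ∀ i, ¬ S i → e i = 0 then monomial e r else (0 : MvPolynomial σ K) := by
      rw [restr, aeval_monomial, Finsupp.prod]
      split_ifs with h
      · rw [monomial_eq, Finsupp.prod]
        congr 1
        refine Finset.prod_congr rfl fun i hi => ?_
        rw [if_pos]
        by_contra hS
        exact Finsupp.mem_support_iff.mp hi (h i hS)
      · push Not at h
        obtain ⟨i, hS, hi⟩ := h
        rw [Finset.prod_eq_zero (Finsupp.mem_support_iff.mpr hi), mul_zero]
        rw [if_neg hS, zero_pow hi]
    rw [key]
    by_cases hed : e = d
    · subst hed
      split_ifs <;> simp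
    · split_ifs <;> simp [coeff_monomial, hed]
  | add f g hf hg =>
    rw [map_add, coeff_add, hf, hg, coeff_add]
    split_ifs <;> simp

lemma mem_support_restr {S : σ → Prop} {f : MvPolynomial σ K} {d : σ →₀ ℕ} :
    d ∈ (restr S f).support ↔ (∀ i, ¬ S i → d i = 0) ∧ d ∈ f.support := by
  classical
  rw [mem_support_iff, coeff_restr, mem_support_iff]
  split_ifs with h
  · exact ⟨fun hd => ⟨h, hd⟩, fun hd => hd.2⟩
  · exact ⟨fun hd => absurd rfl hd, fun hd => absurd hd.1 h⟩

/-- Restricting `f + g` to the variables of `f` leaves `f` plus a constant. -/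
lemma totalDegree_restr_add {S : σ → Prop} {f g : MvPolynomial σ K}
    (hf : ∀ m ∈ f.support, ∀ i, ¬ S i → m i = 0) (hg : ∀ m ∈ g.support, ∀ i, S i → m i = 0)
    (hpos : 0 < f.totalDegree) : (restr S (f + g)).totalDegree = f.totalDegree := by
  have hz : ∀ m : σ →₀ ℕ, m ≠ 0 → (∀ i, ¬ S i → m i = 0) → coeff m g = 0 := by
    intro m hm hS
    by_contra hc
    apply hm
    ext i
    by_cases hi : S i
    · exact hg m (mem_support_iff.mpr hc) i hi
    · exact hS i hi
  apply le_antisymm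
  · refine Finset.sup_le fun m hm => ?_
    obtain ⟨hS, hm⟩ := mem_support_restr.mp hm
    by_cases h0 : m = 0
    · simp [h0]
    · rw [mem_support_iff, coeff_add, hz m h0 hS, add_zero] at hm
      exact le_totalDegree (mem_support_iff.mpr hm)
  · have hf0 : f ≠ 0 := by
      rintro rfl
      simp at hpos
    obtain ⟨m, hm, hdeg⟩ :=
      Finset.exists_mem_eq_sup f.support (support_nonempty.mpr hf0) fun s => s.sum fun _ e => e
    have hm0 : m ≠ 0 := by
      rintro rfl
      rw [totalDegree, hdeg] at hpos
      simp at hpos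
    rw [totalDegree, hdeg]
    refine le_totalDegree (mem_support_restr.mpr ⟨hf m hm, ?_⟩)
    rw [mem_support_iff, coeff_add, hz m hm0 (hf m hm), add_zero]
    exact mem_support_iff.mp hm

/-- If the variables in `S` all have weight `q`, a top-degree monomial of `restr S f` is a monomial
of `f` of weight `q * (restr S f).totalDegree`. -/
lemma mul_totalDegree_restr_le {S : σ → Prop} {w : σ → ℕ} {q : ℕ} (hw : ∀ i, S i → w i = q)
    {f : MvPolynomial σ K} (hf : restr S f ≠ 0) :
    q * (restr S f).totalDegree ≤ (grade w f).natDegree := by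
  obtain ⟨m, hm, hdeg⟩ := Finset.exists_mem_eq_sup (restr S f).support
    (support_nonempty.mpr hf) fun s => s.sum fun _ e => e
  obtain ⟨hS, hm⟩ := mem_support_restr.mp hm
  rw [totalDegree, hdeg]
  refine le_of_eq_of_le ?_ (weight_le_natDegree_grade w hm)
  rw [Finsupp.weight_apply, Finsupp.sum, Finsupp.sum, Finset.mul_sum]
  refine Finset.sum_congr rfl fun i hi => ?_
  rw [hw i, smul_eq_mul, mul_comm]
  by_contra h
  exact Finsupp.mem_support_iff.mp hi (hS i h)

lemma natDegree_grade_le_of_support {S : σ → Prop} {w : σ → ℕ} {q : ℕ} (hw : ∀ i, S i → w i = q)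
    {f : MvPolynomial σ K} (hf : ∀ m ∈ f.support, ∀ i, ¬ S i → m i = 0) :
    (grade w f).natDegree ≤ q * f.totalDegree := by
  refine natDegree_grade_le w fun m hm => ?_
  refine le_of_eq_of_le ?_ (Nat.mul_le_mul_left q (le_totalDegree hm))
  rw [Finsupp.weight_apply, Finsupp.sum, Finsupp.sum, Finset.mul_sum]
  refine Finset.sum_congr rfl fun i hi => ?_
  rw [hw i, smul_eq_mul, mul_comm]
  by_contra h
  exact Finsupp.mem_support_iff.mp hi (hf m hm i h)

/-- The numerical core: all the bounds must be equalities, so `q * i = p * j` and `p ∣ i`, which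
leaves only `i = 0` and `i = p`. -/
lemma eq_zero_of_degree_bounds {p q i i' j j' a b : ℕ}
    (hpq : Nat.Coprime p q) (hi : i + i' = p) (hj : j + j' = q)
    (h1 : q * i ≤ a) (h2 : p * j ≤ a) (h3 : q * i' ≤ b) (h4 : p * j' ≤ b)
    (hab : a + b ≤ q * p) : a = 0 ∨ b = 0 := by
  have e1 : q * i + q * i' = q * p := by rw [← mul_add, hi]
  have e2 : p * j + p * j' = q * p := by rw [← mul_add, hj, mul_comm]
  have ha : a = q * i := by omega
  have hb : b = q * i' := by omega
  have hij : q * i = p * j := by omega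
  have hdvd : p ∣ i := hpq.dvd_of_dvd_mul_left ⟨j, hij⟩
  rcases Nat.eq_zero_or_pos i with h0 | hpos
  · left
    rw [ha, h0, mul_zero]
  · right
    have := Nat.le_of_dvd hpos hdvd
    rw [hb, show i' = 0 by omega, mul_zero]

/-- The theorem over an arbitrary field, with the two blocks of variables given by a predicate `S`
and its negation. -/
theorem irreducible_add {S : σ → Prop} {f g : MvPolynomial σ K}
    (hf : ∀ m ∈ f.support, ∀ i, ¬ S i → m i = 0) (hg : ∀ m ∈ g.support, ∀ i, S i → m i = 0)
    (hf0 : 0 < f.totalDegree) (hg0 : 0 < g.totalDegree)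
    (hfg : Nat.Coprime f.totalDegree g.totalDegree) : Irreducible (f + g) := by
  classical
  set w : σ → ℕ := fun i => if S i then g.totalDegree else f.totalDegree with hw
  have hw1 : ∀ i, S i → w i = g.totalDegree := fun i hi => by simp [hw, hi]
  have hw2 : ∀ i, ¬ S i → w i = f.totalDegree := fun i hi => by simp [hw, hi]
  have hwpos : ∀ i, 0 < w i := fun i => by
    by_cases hi : S i
    · rwa [hw1 i hi]
    · rwa [hw2 i hi]
  have hg' : ∀ m ∈ g.support, ∀ i, ¬¬ S i → m i = 0 := fun m hm i hi =>
    hg m hm i (not_not.mp hi)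
  have hd1 : (restr S (f + g)).totalDegree = f.totalDegree := totalDegree_restr_add hf hg hf0
  have hd2 : (restr (fun i => ¬ S i) (f + g)).totalDegree = g.totalDegree := by
    rw [add_comm]
    exact totalDegree_restr_add hg' hf hg0
  have hn : (grade w (f + g)).natDegree ≤ g.totalDegree * f.totalDegree := by
    rw [map_add]
    refine (Polynomial.natDegree_add_le _ _).trans (max_le ?_ ?_)
    · exact natDegree_grade_le_of_support hw1 hf
    · rw [mul_comm]
      exact natDegree_grade_le_of_support (S := fun i => ¬ S i) hw2 hg'
  refine ⟨fun hu => ?_, fun A B hAB => ?_⟩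
  · have := (isUnit_iff_totalDegree_of_isReduced.mp (hu.map (restr S))).2
    omega
  · rw [hAB] at hd1 hd2 hn
    rw [map_mul] at hd1 hd2
    have hne1 : restr S A * restr S B ≠ 0 := fun h => by
      rw [h, totalDegree_zero] at hd1
      omega
    have hne2 : restr (fun i => ¬ S i) A * restr (fun i => ¬ S i) B ≠ 0 := fun h => by
      rw [h, totalDegree_zero] at hd2
      omega
    obtain ⟨hA1, hB1⟩ := mul_ne_zero_iff.mp hne1
    obtain ⟨hA2, hB2⟩ := mul_ne_zero_iff.mp hne2
    rw [totalDegree_mul_of_isDomain hA1 hB1] at hd1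
    rw [totalDegree_mul_of_isDomain hA2 hB2] at hd2
    have hA : A ≠ 0 := fun h => hA1 (by rw [h, map_zero])
    have hB : B ≠ 0 := fun h => hB1 (by rw [h, map_zero])
    rw [natDegree_grade_mul w hA hB] at hn
    exact (eq_zero_of_degree_bounds hfg hd1 hd2 (mul_totalDegree_restr_le hw1 hA1)
      (mul_totalDegree_restr_le hw2 hA2) (mul_totalDegree_restr_le hw1 hB1)
      (mul_totalDegree_restr_le hw2 hB2) hn).imp
      (isUnit_of_natDegree_grade_eq_zero w hwpos hA)
      (isUnit_of_natDegree_grade_eq_zero w hwpos hB)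

end DisjointVars


/-- **Theorem (main).** Let `n ≥ 2`, `1 ≤ ν ≤ n-1`, and `P = P₁ + P₂` where
`P₁ ∈ ℂ[z₁,…,z_ν]` and `P₂ ∈ ℂ[z_{ν+1},…,zₙ]` are nonconstant. If
`gcd(deg P₁, deg P₂) = 1` then `P` is irreducible over `ℂ`. -/
theorem sum_disjoint_vars_irreducible_of_coprime_degrees
    (n ν : ℕ) (hn : 2 ≤ n) (hν1 : 1 ≤ ν) (hν2 : ν ≤ n - 1)
    (P P₁ P₂ : MvPolynomial (Fin n) ℂ)
    (hsum : P = P₁ + P₂)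
    (hvar1 : ∀ m ∈ P₁.support, ∀ i : Fin n, ν ≤ (i : ℕ) → m i = 0)
    (hvar2 : ∀ m ∈ P₂.support, ∀ i : Fin n, (i : ℕ) < ν → m i = 0)
    (hnc1 : 0 < P₁.totalDegree) (hnc2 : 0 < P₂.totalDegree)
    (hgcd : Nat.gcd P₁.totalDegree P₂.totalDegree = 1) :
    Irreducible P := by
  subst hsum
  exact DisjointVars.irreducible_add (S := fun i : Fin n => (i : ℕ) < ν)
    (fun m hm i hi => hvar1 m hm i (not_lt.mp hi)) hvar2 hnc1 hnc2 hgcd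
end

section
/- Let n ≥ 2 and let I, J be nonempty sets with I ∪ J = {1,…,n} and I ∩ J = ∅. Let P ∈ ℂ[z₁,…,zₙ] be a polynomial that can be written as P = P_I + P_J, where P_I is a nonconstant polynomial depending only on the variables z_i, i ∈ I, and P_J is a nonconstant polynomial depending only on the variables z_j, j ∈ J. If gcd(deg P_I, deg P_J) = 1, then P is irreducible over ℂ. -/
/-!
Write `p = deg P_I` and `q = deg P_J`, and give every variable `z_i`, `i ∈ I`, the weight `q` and
every variable `z_j`, `j ∈ J`, the weight `p`. Then `P` has weighted degree at most `p * q`, and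
weighted degree is additive on products because it is the degree in `T` of the image under the
substitution `z_i ↦ z_i T ^ w_i` (`weightSubst`).

Suppose `P = A * B`, with weighted degrees `a` and `b`. Setting the variables outside `I` to zero
turns `P` into `P_I + const`, which has weighted degree exactly `q * p`; it does not increase the
weighted degrees of `A` and `B`, and afterwards these are multiples of `q`. Since
`a + b ≤ q * p`, nothing is lost, so `q ∣ a` and `a + b = q * p` (`dvd_natDegree_weightSubst`).
By symmetry `p ∣ a`, hence `p * q ∣ a` by coprimality, so `a = 0` or `b = 0`. All weights are
positive, so a factor of weighted degree `0` is constant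
(`isUnit_of_natDegree_weightSubst_eq_zero`).
-/

section Weights

variable {σ K : Type*} [Field K]

/-- The substitution `z_i ↦ z_i T ^ w_i`. The `T`-degree of the image of a polynomial is its
weighted degree for the weights `w`, and its coefficients in `T` are the weighted homogeneous
components. -/
noncomputable def weightSubst (w : σ → ℕ) :
    MvPolynomial σ K →ₐ[K] Polynomial (MvPolynomial σ K) :=
  MvPolynomial.aeval fun i => Polynomial.C (MvPolynomial.X i) * Polynomial.X ^ w i

open Classical in
/-- The substitution `z_i ↦ z_i T` for `i ∈ S` and `z_i ↦ 0` for `i ∉ S`: it sets the variables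
outside `S` to zero and records the ordinary total degree of the result by `T`. -/
noncomputable def restrictSubst (S : Set σ) :
    MvPolynomial σ K →ₐ[K] Polynomial (MvPolynomial σ K) :=
  MvPolynomial.aeval fun i =>
    if i ∈ S then Polynomial.C (MvPolynomial.X i) * Polynomial.X else 0

lemma aeval_congr_vars {A : Type*} [CommRing A] [Algebra K A] {g₁ g₂ : σ → A}
    {f : MvPolynomial σ K} (h : ∀ i ∈ f.vars, g₁ i = g₂ i) :
    MvPolynomial.aeval g₁ f = MvPolynomial.aeval g₂ f :=
  MvPolynomial.eval₂Hom_congr' rfl (fun i hi _ => h i hi) rfl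

/-- Evaluating the auxiliary variable `T` at `t`. -/
lemma aeval_weightSubst (w : σ → ℕ) (A t : MvPolynomial σ K) :
    Polynomial.aeval t (weightSubst w A) =
      MvPolynomial.aeval (fun i => (MvPolynomial.X i : MvPolynomial σ K) * t ^ w i) A := by
  change ((Polynomial.aeval (R := MvPolynomial σ K) t).restrictScalars K) _ = _
  rw [weightSubst, MvPolynomial.comp_aeval_apply]
  simp

lemma weightSubst_ne_zero (w : σ → ℕ) {A : MvPolynomial σ K} (hA : A ≠ 0) :
    weightSubst w A ≠ 0 := fun h => hA <| by
  simpa [h] using (aeval_weightSubst w A 1).symm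

lemma weightSubst_one_monomial (d : σ →₀ ℕ) (c : K) :
    weightSubst (fun _ => 1) (MvPolynomial.monomial d c) =
      Polynomial.monomial d.degree (MvPolynomial.monomial d c) := by
  rw [weightSubst, MvPolynomial.aeval_monomial, Finsupp.prod]
  simp only [pow_one, mul_pow, Finset.prod_mul_distrib, Finset.prod_pow_eq_pow_sum]
  rw [← Polynomial.C_mul_X_pow_eq_monomial, MvPolynomial.monomial_eq, Finsupp.prod,
    Finsupp.degree_apply]
  simp only [map_mul, map_prod, map_pow, mul_assoc]
  rfl

lemma coeff_weightSubst_one (f : MvPolynomial σ K) (k : ℕ) :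
    (weightSubst (fun _ => 1) f).coeff k = MvPolynomial.homogeneousComponent k f := by
  classical
  induction f using MvPolynomial.induction_on' with
  | monomial d c =>
    rw [weightSubst_one_monomial, Polynomial.coeff_monomial]
    ext m
    rw [MvPolynomial.coeff_homogeneousComponent]
    by_cases hm : d = m
    · subst hm; split_ifs <;> simp
    · split_ifs <;> simp [MvPolynomial.coeff_monomial, hm]
  | add f g hf hg => rw [map_add, Polynomial.coeff_add, hf, hg, map_add]

lemma natDegree_weightSubst_one (f : MvPolynomial σ K) :
    (weightSubst (fun _ => 1) f).natDegree = f.totalDegree := by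
  rcases eq_or_ne f 0 with rfl | hf
  · simp
  apply le_antisymm
  · refine Polynomial.natDegree_le_iff_coeff_eq_zero.2 fun k hk => ?_
    rw [coeff_weightSubst_one, MvPolynomial.homogeneousComponent_eq_zero _ _ hk]
  · obtain ⟨m, hm, hmd⟩ := Finset.exists_mem_eq_sup f.support
      (MvPolynomial.support_nonempty.2 hf) (fun s => s.sum fun _ e => e)
    refine Polynomial.le_natDegree_of_ne_zero fun h => ?_
    rw [coeff_weightSubst_one] at h
    have h' := congrArg (MvPolynomial.coeff m) h
    rw [MvPolynomial.coeff_homogeneousComponent, if_pos] at h'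
    · exact MvPolynomial.mem_support_iff.1 hm (by simpa using h')
    · rw [MvPolynomial.totalDegree, hmd]; rfl

lemma restrictSubst_eq_weightSubst_one {S : Set σ} {f : MvPolynomial σ K}
    (hf : ∀ i ∈ f.vars, i ∈ S) : restrictSubst S f = weightSubst (fun _ => 1) f :=
  aeval_congr_vars fun i hi => by simp [hf i hi]

lemma restrictSubst_of_disjoint {S : Set σ} {g : MvPolynomial σ K}
    (hg : ∀ i ∈ g.vars, i ∉ S) :
    restrictSubst S g = Polynomial.C (MvPolynomial.C (MvPolynomial.constantCoeff g)) := by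
  have : restrictSubst S g = MvPolynomial.aeval
      (fun _ => (0 : Polynomial (MvPolynomial σ K))) g :=
    aeval_congr_vars fun i hi => by simp [hg i hi]
  rw [this, MvPolynomial.aeval_zero']
  rfl

/-- On a polynomial in variables of the same weight `q`, the weighted degree is `q` times the
total degree. -/
lemma natDegree_weightSubst_of_vars {S : Set σ} {w : σ → ℕ} {q : ℕ} (hw : ∀ i ∈ S, w i = q)
    {f : MvPolynomial σ K} (hf : ∀ i ∈ f.vars, i ∈ S) :
    (weightSubst w f).natDegree = f.totalDegree * q := by
  have h : weightSubst w f =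
      Polynomial.expand (MvPolynomial σ K) q (weightSubst (fun _ => 1) f) := by
    change _ = ((Polynomial.expand (MvPolynomial σ K) q).restrictScalars K) _
    rw [weightSubst, weightSubst, MvPolynomial.comp_aeval_apply]
    exact aeval_congr_vars fun i hi => by simp [hw i (hf i hi)]
  rw [h, Polynomial.natDegree_expand, natDegree_weightSubst_one]

/-- Setting the variables outside `S` to zero does not increase the weighted degree. -/
lemma natDegree_restrictSubst_mul_le {S : Set σ} {w : σ → ℕ} {q : ℕ} (hw : ∀ i ∈ S, w i = q)
    (A : MvPolynomial σ K) :
    (restrictSubst S A).natDegree * q ≤ (weightSubst w A).natDegree := by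
  classical
  -- Restricting and then replacing `T` by `T ^ q` is the same as applying `weightSubst w` and then
  -- killing the variables outside `S` in its coefficients.
  have h : Polynomial.expand (MvPolynomial σ K) q (restrictSubst S A) =
      Polynomial.mapAlgHom (MvPolynomial.aeval (R := K)
        fun i => if i ∈ S then (MvPolynomial.X i : MvPolynomial σ K) else 0)
        (weightSubst w A) := by
    change ((Polynomial.expand (MvPolynomial σ K) q).restrictScalars K) _ = _
    rw [weightSubst, restrictSubst, MvPolynomial.comp_aeval_apply, MvPolynomial.comp_aeval_apply]
    refine aeval_congr_vars fun i _ => ?_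
    by_cases hi : i ∈ S
    · simp [hi, hw i hi]
    · simp [hi]
  rw [← Polynomial.natDegree_expand, h]
  exact Polynomial.natDegree_map_le

/-- If `A * B = f + g` with `f` in the variables of `S`, all of weight `q`, and `g` in the other
variables, and the weighted degree of `A * B` does not exceed that of `f`, then the weighted
degrees of `A` and `B` add up to that of `f` and the one of `A` is a multiple of `q`: no weighted
degree can be lost when the variables outside `S` are set to zero. -/
lemma dvd_natDegree_weightSubst {S : Set σ} {w : σ → ℕ} {q : ℕ} (hw : ∀ i ∈ S, w i = q)
    {f g A B : MvPolynomial σ K} (hf : ∀ i ∈ f.vars, i ∈ S) (hg : ∀ i ∈ g.vars, i ∉ S)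
    (hdeg : 0 < f.totalDegree) (hAB : A * B = f + g)
    (hle : (weightSubst w A).natDegree + (weightSubst w B).natDegree ≤ f.totalDegree * q) :
    q ∣ (weightSubst w A).natDegree ∧
      (weightSubst w A).natDegree + (weightSubst w B).natDegree = f.totalDegree * q := by
  have h1 : (restrictSubst S A * restrictSubst S B).natDegree = f.totalDegree := by
    rw [← map_mul, hAB, map_add, restrictSubst_of_disjoint hg, Polynomial.natDegree_add_C,
      restrictSubst_eq_weightSubst_one hf, natDegree_weightSubst_one]
  have hA : restrictSubst S A ≠ 0 := fun h => by simp [h] at h1; omega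
  have hB : restrictSubst S B ≠ 0 := fun h => by simp [h] at h1; omega
  rw [Polynomial.natDegree_mul hA hB] at h1
  have h2 := natDegree_restrictSubst_mul_le hw A
  have h3 := natDegree_restrictSubst_mul_le hw B
  rw [← h1, add_mul] at hle ⊢
  exact ⟨⟨(restrictSubst S A).natDegree, by linarith⟩, by linarith⟩

/-- For positive weights, a nonzero polynomial of weighted degree `0` is constant, as seen by
comparing the values of its image under `weightSubst` at `T = 1` and `T = 0`. -/
lemma isUnit_of_natDegree_weightSubst_eq_zero {w : σ → ℕ} (hw : ∀ i, w i ≠ 0)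
    {A : MvPolynomial σ K} (hA : A ≠ 0) (h : (weightSubst w A).natDegree = 0) : IsUnit A := by
  obtain ⟨c, hc⟩ := Polynomial.natDegree_eq_zero.1 h
  have key : ∀ t : MvPolynomial σ K,
      MvPolynomial.aeval (fun i => (MvPolynomial.X i : MvPolynomial σ K) * t ^ w i) A = c := by
    intro t
    rw [← aeval_weightSubst, ← hc, Polynomial.aeval_C, Algebra.algebraMap_self_apply]
  have h1 := key 1
  have h0 := key 0
  simp only [one_pow, mul_one, MvPolynomial.aeval_X_left_apply] at h1
  simp only [zero_pow (hw _), mul_zero, MvPolynomial.aeval_zero'] at h0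
  have hAc : A = MvPolynomial.C (MvPolynomial.constantCoeff A) := h1.trans h0.symm
  rw [hAc]
  refine (IsUnit.mk0 _ fun h => hA ?_).map MvPolynomial.C
  rw [hAc, h, map_zero]

end Weights


/-- Let `n ≥ 2` and let `I, J` be nonempty sets with `I ∪ J = {1,…,n}` and `I ∩ J = ∅`.
If `P = P_I + P_J` with `P_I`, `P_J` nonconstant polynomials depending only on the
variables indexed by `I` and `J` respectively, and `gcd(deg P_I, deg P_J) = 1`,
then `P` is irreducible over `ℂ`. -/
theorem sum_disjoint_index_sets_irreducible_of_coprime_degrees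
    (n : ℕ) (hn : 2 ≤ n) (I J : Set (Fin n))
    (hI : I.Nonempty) (hJ : J.Nonempty)
    (hUnion : I ∪ J = Set.univ) (hInter : I ∩ J = ∅)
    (P PI PJ : MvPolynomial (Fin n) ℂ)
    (hsum : P = PI + PJ)
    (hvarI : ∀ m ∈ PI.support, ∀ i : Fin n, i ∉ I → m i = 0)
    (hvarJ : ∀ m ∈ PJ.support, ∀ j : Fin n, j ∉ J → m j = 0)
    (hncI : 0 < PI.totalDegree) (hncJ : 0 < PJ.totalDegree)
    (hgcd : Nat.gcd PI.totalDegree PJ.totalDegree = 1) :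
    Irreducible P := by
  classical
  have hIJ : ∀ i, i ∈ J ↔ i ∉ I := fun i => by
    have h1 : i ∈ I ∪ J := hUnion ▸ Set.mem_univ i
    have h2 : i ∉ I ∩ J := hInter ▸ Set.notMem_empty i
    grind
  have hvI : ∀ i ∈ PI.vars, i ∈ I := fun i hi => by
    obtain ⟨m, hm, him⟩ := (MvPolynomial.mem_vars_iff_mem_support i).1 hi
    by_contra h
    exact Finsupp.mem_support_iff.1 him (hvarI m hm i h)
  have hvJ : ∀ i ∈ PJ.vars, i ∈ J := fun i hi => by
    obtain ⟨m, hm, him⟩ := (MvPolynomial.mem_vars_iff_mem_support i).1 hi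
    by_contra h
    exact Finsupp.mem_support_iff.1 him (hvarJ m hm i h)
  let w : Fin n → ℕ := fun i => if i ∈ I then PJ.totalDegree else PI.totalDegree
  have hwI : ∀ i ∈ I, w i = PJ.totalDegree := fun i hi => if_pos hi
  have hwJ : ∀ i ∈ J, w i = PI.totalDegree := fun i hi => if_neg ((hIJ i).1 hi)
  have hw : ∀ i, w i ≠ 0 := fun i => by
    simp only [w]; split_ifs <;> omega
  have hle : (weightSubst w P).natDegree ≤ PI.totalDegree * PJ.totalDegree := by
    rw [hsum, map_add]
    refine Polynomial.natDegree_add_le_of_degree_le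
      (natDegree_weightSubst_of_vars hwI hvI).le ?_
    rw [natDegree_weightSubst_of_vars hwJ hvJ, mul_comm]
  -- Setting the variables outside `I` to zero turns `P` into a nonconstant polynomial.
  have hP0 : P ≠ 0 := fun h => by
    have h1 := congrArg (fun Q => (restrictSubst I Q).natDegree) (hsum.symm.trans h)
    simp only [map_add, map_zero, Polynomial.natDegree_zero,
      restrictSubst_of_disjoint (fun i hi => (hIJ i).1 (hvJ i hi)), Polynomial.natDegree_add_C,
      restrictSubst_eq_weightSubst_one hvI, natDegree_weightSubst_one] at h1
    omega
  have hpos : 0 < PI.totalDegree * PJ.totalDegree := Nat.mul_pos hncI hncJ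
  -- Applied to an arbitrary factorization, including `P = P * 1`.
  have key : ∀ A B, P = A * B → A ≠ 0 ∧ B ≠ 0 ∧
      PI.totalDegree * PJ.totalDegree ∣ (weightSubst w A).natDegree ∧
      (weightSubst w A).natDegree + (weightSubst w B).natDegree =
        PI.totalDegree * PJ.totalDegree := by
    intro A B hAB
    have hne : A * B ≠ 0 := by
      rw [← hAB]
      exact hP0
    have hA := left_ne_zero_of_mul hne
    have hB := right_ne_zero_of_mul hne
    rw [hAB, map_mul, Polynomial.natDegree_mul (weightSubst_ne_zero w hA)
      (weightSubst_ne_zero w hB)] at hle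
    have hI' := dvd_natDegree_weightSubst hwI hvI (fun i hi => (hIJ i).1 (hvJ i hi)) hncI
      (hAB.symm.trans hsum) hle
    have hJ' := dvd_natDegree_weightSubst hwJ hvJ (fun i hi h => (hIJ i).1 h (hvI i hi)) hncJ
      (hAB.symm.trans (hsum.trans (add_comm _ _))) (hle.trans (mul_comm _ _).le)
    exact ⟨hA, hB, Nat.Coprime.mul_dvd_of_dvd_of_dvd hgcd hJ'.1 hI'.1, hI'.2⟩
  refine ⟨fun hu => ?_, fun A B hAB => ?_⟩
  · have h := (key P 1 (mul_one P).symm).2.2.2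
    rw [map_one, Polynomial.natDegree_one, Polynomial.natDegree_eq_zero_of_isUnit
      (hu.map (weightSubst w))] at h
    omega
  · obtain ⟨hA, hB, hdvd, hadd⟩ := key A B hAB
    rcases Nat.eq_zero_or_pos (weightSubst w A).natDegree with h | h
    · exact Or.inl (isUnit_of_natDegree_weightSubst_eq_zero hw hA h)
    · have := Nat.le_of_dvd h hdvd
      exact Or.inr (isUnit_of_natDegree_weightSubst_eq_zero hw hB (by omega))
end

section
/- Let n ≥ 2 and 1 ≤ ν ≤ n−1. Let P = P₁ + P₂ where P₁ ∈ ℂ[z₁,…,z_ν] and P₂ ∈ ℂ[z_{ν+1},…,zₙ] are nonconstant polynomials depending on disjoint sets of variables with P₁(0) = 0 and P₂(0) = 0, and write d₁ = deg P₁, d₂ = deg P₂. Let 𝔄₁ = {v ∈ ℝⁿ : v is a vertex of N(P₁) with Σ_{i=1}^{n} v_i = d₁} and 𝔄₂ = {v ∈ ℝⁿ : v is a vertex of N(P₂) with Σ_{i=1}^{n} v_i = d₂}, and let H₀ = {x ∈ ℝⁿ : d₂(Σ_{i=1}^{ν} x_i) + d₁(Σ_{j=1}^{n−ν} x_{ν+j})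 = d₁d₂}. Then H₀ ∩ N(P) is a face of N(P), and H₀ ∩ N(P) = { tα + (1−t)β : t ∈ [0,1], α ∈ conv(𝔄₁), β ∈ conv(𝔄₂) }. -/
/-!
The hyperplane `H₀` is the level set `ℓ = d₁ d₂` of the linear form `ℓ` with weight `d₂` on the
first `ν` coordinates and `d₁` on the others. On exponents of `P₁` it equals `d₂ · |m|`, on
exponents of `P₂` it equals `d₁ · |m|`; hence `ℓ ≤ d₁ d₂` on `N(P)`, and equality holds at an
exponent exactly when it has top degree in its own polynomial. Since the constant terms vanish,
no exponent is shared, so nothing cancels in `P₁ + P₂` and the support of `P` is the union of the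
two supports.

Cutting a polytope by a supporting hyperplane gives an extreme subset, so by Krein–Milman the cut
is the convex hull both of the generators on the hyperplane and of the vertices on the hyperplane
(`convexHull_inter_level`, `convexHull_inter_level_eq_extreme`). Therefore `H₀ ∩ N(P)` is the
convex hull of the union of the two sets of top-degree exponents, which is the join of their convex
hulls, and each of these is the convex hull of the top-degree vertices.
-/

open Pointwise

/-- The Newton polytope of a polynomial in `n` variables: the convex hull in `ℝⁿ`
of the set of exponent vectors of monomials appearing with nonzero coefficient. -/
def newtonPolytope {n : ℕ} (P : MvPolynomial (Fin n) ℂ) : Set (Fin n → ℝ) :=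
  convexHull ℝ ((fun (m : Fin n →₀ ℕ) (i : Fin n) => (m i : ℝ)) '' (P.support : Set (Fin n →₀ ℕ)))

/-- A vertex of a set `S ⊆ ℝⁿ`: a point of `S` that does not lie in the interior of the
convex hull of two distinct points of `S`. -/
def IsVertex {n : ℕ} (S : Set (Fin n → ℝ)) (v : Fin n → ℝ) : Prop :=
  v ∈ S ∧ ¬ ∃ a ∈ S, ∃ b ∈ S, a ≠ b ∧ v ∈ openSegment ℝ a b

/-- An integral polytope: the convex hull of finitely many integral points. -/
def IsIntegralPolytope {n : ℕ} (C : Set (Fin n → ℝ)) : Prop :=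
  ∃ F : Finset (Fin n → ℝ), F.Nonempty ∧ (∀ x ∈ F, ∀ i, ∃ k : ℤ, x i = (k : ℝ)) ∧
    C = convexHull ℝ (F : Set (Fin n → ℝ))

/-- An integral polytope is integrally decomposable if it is the Minkowski sum of two
integral polytopes each containing at least two points. -/
def IntegrallyDecomposable {n : ℕ} (C : Set (Fin n → ℝ)) : Prop :=
  ∃ A B : Set (Fin n → ℝ), IsIntegralPolytope A ∧ IsIntegralPolytope B ∧
    (∃ a ∈ A, ∃ a' ∈ A, a ≠ a') ∧ (∃ b ∈ B, ∃ b' ∈ B, b ≠ b') ∧ C = A + B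

/-- `F` is a face of the convex set `C`: `F = C ∩ H` for a supporting hyperplane `H` of `C`. -/
def IsFace {n : ℕ} (C F : Set (Fin n → ℝ)) : Prop :=
  ∃ (α : Fin n → ℝ) (γ : ℝ), α ≠ 0 ∧
    (C ∩ {x | ∑ i, α i * x i = γ}).Nonempty ∧
    ((∀ x ∈ C, ∑ i, α i * x i ≤ γ) ∨ (∀ x ∈ C, γ ≤ ∑ i, α i * x i)) ∧
    F = C ∩ {x | ∑ i, α i * x i = γ}

/-- The exponent vectors of the monomials of a polynomial, as points of `ℝⁿ`. -/
def exponentPoints {n : ℕ} (P : MvPolynomial (Fin n) ℂ) : Set (Fin n → ℝ) :=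
  (fun (m : Fin n →₀ ℕ) (i : Fin n) => (m i : ℝ)) '' (P.support : Set (Fin n →₀ ℕ))

theorem exponentPoints_finite {n : ℕ} (P : MvPolynomial (Fin n) ℂ) :
    (exponentPoints P).Finite :=
  P.support.finite_toSet.image _

theorem isVertex_iff_mem_extremePoints {n : ℕ} (S : Set (Fin n → ℝ)) (v : Fin n → ℝ) :
    IsVertex S v ↔ v ∈ S.extremePoints ℝ := by
  rw [mem_extremePoints]
  refine and_congr_right fun _ => ⟨fun h a ha b hb hab => ?_, ?_⟩
  · by_cases hne : a = b
    · subst hne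
      simp only [openSegment_same, Set.mem_singleton_iff] at hab
      exact ⟨hab.symm, hab.symm⟩
    · exact absurd ⟨a, ha, b, hb, hne, hab⟩ h
  · rintro h ⟨a, ha, b, hb, hne, hab⟩
    obtain ⟨h1, h2⟩ := h a ha b hb hab
    exact hne (h1.trans h2.symm)

/-- The linear form `x ↦ ∑ wᵢ xᵢ`. -/
def weightForm {n : ℕ} (w : Fin n → ℝ) : (Fin n → ℝ) →ₗ[ℝ] ℝ where
  toFun x := ∑ i, w i * x i
  map_add' x y := by simp [mul_add, Finset.sum_add_distrib]
  map_smul' c x := by simp [Finset.mul_sum, mul_left_comm]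

theorem weightForm_apply {n : ℕ} (w x : Fin n → ℝ) : weightForm w x = ∑ i, w i * x i := rfl

theorem le_on_convexHull {n : ℕ} {S : Set (Fin n → ℝ)} (l : (Fin n → ℝ) →ₗ[ℝ] ℝ) {c : ℝ}
    (h : ∀ x ∈ S, l x ≤ c) : ∀ x ∈ convexHull ℝ S, l x ≤ c :=
  fun _ hx => convexHull_min h (convex_halfSpace_le l.isLinear c) hx

/-- A supporting hyperplane cuts a polytope in the convex hull of the vertices it contains: the cut
is an extreme subset, so its extreme points are extreme in the whole polytope, and Krein–Milman
applies; the closure is harmless because there are finitely many extreme points. -/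
theorem convexHull_inter_level_eq_extreme {n : ℕ} {S : Set (Fin n → ℝ)} (hS : S.Finite)
    (l : (Fin n → ℝ) →ₗ[ℝ] ℝ) {c : ℝ} (h : ∀ x ∈ S, l x ≤ c) :
    convexHull ℝ S ∩ {x | l x = c} =
      convexHull ℝ ((convexHull ℝ S).extremePoints ℝ ∩ {x | l x = c}) := by
  set C := convexHull ℝ S with hC
  have hle := le_on_convexHull l h
  have hlc : Continuous l := l.continuous_of_finiteDimensional
  have hconv : Convex ℝ (C ∩ {x | l x = c}) :=
    (convex_convexHull ℝ S).inter (convex_hyperplane l.isLinear c)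
  have hcomp : IsCompact (C ∩ {x | l x = c}) :=
    hS.isCompact_convexHull ℝ |>.inter_right (isClosed_eq hlc continuous_const)
  have hext : IsExtreme ℝ C (C ∩ {x | l x = c}) := by
    refine ⟨Set.inter_subset_left, ?_⟩
    rintro a ha b hb x ⟨_, hx⟩ ⟨s, t, hs, ht, hst, rfl⟩
    refine ⟨ha, ?_⟩
    have h1 := hle a ha
    have h2 := hle b hb
    simp only [Set.mem_ofPred_eq, map_add, map_smul, smul_eq_mul] at hx ⊢
    have hs1 : s * l a + t * l b = s * c + t * c := by rw [hx, ← add_mul, hst, one_mul]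
    have h3 := mul_le_mul_of_nonneg_left h2 ht.le
    have h4 : s * c ≤ s * l a := by linarith
    exact le_antisymm h1 (le_of_mul_le_mul_left h4 hs)
  have hE : (C ∩ {x | l x = c}).extremePoints ℝ = C.extremePoints ℝ ∩ {x | l x = c} := by
    rw [hext.extremePoints_eq]
    ext x
    constructor
    · rintro ⟨⟨_, h2⟩, h3⟩
      exact ⟨h3, h2⟩
    · rintro ⟨h1, h2⟩
      exact ⟨⟨extremePoints_subset h1, h2⟩, h1⟩
  have hfin : (C.extremePoints ℝ ∩ {x | l x = c}).Finite :=
    hS.subset (Set.inter_subset_left.trans extremePoints_convexHull_subset)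
  have hKM := closure_convexHull_extremePoints hcomp hconv
  rw [hE, (hfin.isClosed_convexHull ℝ).closure_eq] at hKM
  exact hKM.symm

theorem convexHull_inter_level {n : ℕ} {S : Set (Fin n → ℝ)} (hS : S.Finite)
    (l : (Fin n → ℝ) →ₗ[ℝ] ℝ) {c : ℝ} (h : ∀ x ∈ S, l x ≤ c) :
    convexHull ℝ S ∩ {x | l x = c} = convexHull ℝ (S ∩ {x | l x = c}) := by
  apply Set.Subset.antisymm
  · rw [convexHull_inter_level_eq_extreme hS l h]
    exact convexHull_mono (Set.inter_subset_inter_left _ extremePoints_convexHull_subset)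
  · exact convexHull_min (Set.inter_subset_inter_left _ (subset_convexHull ℝ S))
      ((convex_convexHull ℝ S).inter (convex_hyperplane l.isLinear c))

theorem exponentPoints_sum_le {n : ℕ} (Q : MvPolynomial (Fin n) ℂ) :
    ∀ x ∈ exponentPoints Q, weightForm 1 x ≤ (Q.totalDegree : ℝ) := by
  rintro _ ⟨m, hm, rfl⟩
  have h := MvPolynomial.le_totalDegree hm
  rw [Finsupp.sum_fintype _ _ (fun _ => rfl)] at h
  simp only [weightForm_apply, Pi.one_apply, one_mul]
  exact_mod_cast h

theorem exists_exponentPoint_sum_eq {n : ℕ} (Q : MvPolynomial (Fin n) ℂ)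
    (hQ : 0 < Q.totalDegree) :
    (exponentPoints Q ∩ {x | weightForm 1 x = (Q.totalDegree : ℝ)}).Nonempty := by
  have hne : Q.support.Nonempty := by
    rw [Finset.nonempty_iff_ne_empty]
    intro h
    rw [MvPolynomial.support_eq_empty] at h
    simp [h] at hQ
  obtain ⟨m, hm, h⟩ := Finset.exists_mem_eq_sup Q.support hne (fun s => s.sum fun _ e => e)
  refine ⟨_, ⟨m, hm, rfl⟩, ?_⟩
  have h' : Q.totalDegree = ∑ i, m i := by
    rw [MvPolynomial.totalDegree, h, Finsupp.sum_fintype _ _ (fun _ => rfl)]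
  simp only [Set.mem_ofPred_eq, weightForm_apply, Pi.one_apply, one_mul]
  rw [h']
  push_cast
  rfl

/-- The top-degree vertices of a Newton polytope and the top-degree exponents have the same
convex hull. -/
theorem convexHull_top_vertices {n : ℕ} (Q : MvPolynomial (Fin n) ℂ) :
    convexHull ℝ {v : Fin n → ℝ | IsVertex (newtonPolytope Q) v ∧
        ∑ i, v i = (Q.totalDegree : ℝ)} =
      convexHull ℝ (exponentPoints Q ∩ {x | weightForm 1 x = (Q.totalDegree : ℝ)}) := by
  have hfin := exponentPoints_finite Q
  have hle := exponentPoints_sum_le Q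
  rw [← convexHull_inter_level hfin _ hle, convexHull_inter_level_eq_extreme hfin _ hle]
  congr 1
  ext v
  simp only [isVertex_iff_mem_extremePoints, Set.mem_ofPred_eq, Set.mem_inter_iff,
    weightForm_apply, Pi.one_apply, one_mul]
  rfl

/-- Polynomials without a common monomial do not cancel. -/
theorem exponentPoints_add {n : ℕ} (P₁ P₂ : MvPolynomial (Fin n) ℂ)
    (hdisj : Disjoint P₁.support P₂.support) :
    exponentPoints (P₁ + P₂) = exponentPoints P₁ ∪ exponentPoints P₂ := by
  classical
  have h : (P₁ + P₂).support = P₁.support ∪ P₂.support := Finsupp.support_add_eq hdisj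
  rw [exponentPoints, h, Finset.coe_union, Set.image_union]
  rfl

/-- **Proposition.** With `P = P₁ + P₂` as usual, `d₁ = deg P₁`, `d₂ = deg P₂`,
`𝔄ⱼ` the set of vertices `v` of `N(Pⱼ)` with `Σᵢ vᵢ = dⱼ`, and
`H₀ = {x : d₂ Σ_{i≤ν} xᵢ + d₁ Σ_{i>ν} xᵢ = d₁ d₂}`, the set `H₀ ∩ N(P)` is a face of `N(P)`
and equals `{ tα + (1−t)β : t ∈ [0,1], α ∈ conv(𝔄₁), β ∈ conv(𝔄₂) }`. -/
theorem face_cut_by_degree_hyperplane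
    (n ν : ℕ) (hn : 2 ≤ n) (hν1 : 1 ≤ ν) (hν2 : ν ≤ n - 1)
    (P P₁ P₂ : MvPolynomial (Fin n) ℂ)
    (hsum : P = P₁ + P₂)
    (hvar1 : ∀ m ∈ P₁.support, ∀ i : Fin n, ν ≤ (i : ℕ) → m i = 0)
    (hvar2 : ∀ m ∈ P₂.support, ∀ i : Fin n, (i : ℕ) < ν → m i = 0)
    (hnc1 : 0 < P₁.totalDegree) (hnc2 : 0 < P₂.totalDegree)
    (h01 : MvPolynomial.coeff 0 P₁ = 0) (h02 : MvPolynomial.coeff 0 P₂ = 0)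
    (d₁ d₂ : ℕ) (hd1 : d₁ = P₁.totalDegree) (hd2 : d₂ = P₂.totalDegree)
    (A₁ A₂ H₀ : Set (Fin n → ℝ))
    (hA1 : A₁ = {v : Fin n → ℝ | IsVertex (newtonPolytope P₁) v ∧ ∑ i, v i = (d₁ : ℝ)})
    (hA2 : A₂ = {v : Fin n → ℝ | IsVertex (newtonPolytope P₂) v ∧ ∑ i, v i = (d₂ : ℝ)})
    (hH0 : H₀ = {x : Fin n → ℝ |
      (d₂ : ℝ) * (∑ i ∈ Finset.univ.filter (fun i : Fin n => (i : ℕ) < ν), x i) +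
      (d₁ : ℝ) * (∑ i ∈ Finset.univ.filter (fun i : Fin n => ν ≤ (i : ℕ)), x i) =
      (d₁ : ℝ) * (d₂ : ℝ)}) :
    IsFace (newtonPolytope P) (H₀ ∩ newtonPolytope P) ∧
      H₀ ∩ newtonPolytope P =
        {x : Fin n → ℝ | ∃ t ∈ Set.Icc (0 : ℝ) 1, ∃ α ∈ convexHull ℝ A₁,
          ∃ β ∈ convexHull ℝ A₂, x = t • α + (1 - t) • β} := by
  classical
  subst hd1 hd2 hA1 hA2
  have hdisj : Disjoint P₁.support P₂.support := by
    rw [Finset.disjoint_left]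
    intro m hm1 hm2
    have hm : m = 0 := by
      ext i
      rcases lt_or_ge (i : ℕ) ν with h | h
      · exact hvar2 m hm2 i h
      · exact hvar1 m hm1 i h
    subst hm
    exact MvPolynomial.mem_support_iff.1 hm1 h01
  have hS : exponentPoints P = exponentPoints P₁ ∪ exponentPoints P₂ := by
    rw [hsum, exponentPoints_add _ _ hdisj]
  set d₁ := P₁.totalDegree
  set d₂ := P₂.totalDegree
  have hd1 : (0 : ℝ) < d₁ := by exact_mod_cast hnc1
  have hd2 : (0 : ℝ) < d₂ := by exact_mod_cast hnc2
  set w : Fin n → ℝ := fun i => if (i : ℕ) < ν then (d₂ : ℝ) else (d₁ : ℝ) with hw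
  have hH : H₀ = {x | weightForm w x = (d₁ : ℝ) * d₂} := by
    rw [hH0]
    ext x
    simp only [Set.mem_ofPred_eq, weightForm_apply, hw, ite_mul, Finset.sum_ite, Finset.mul_sum,
      not_lt]
  have hl1 : ∀ x ∈ exponentPoints P₁, weightForm w x = d₂ * weightForm 1 x := by
    rintro _ ⟨m, hm, rfl⟩
    simp only [weightForm_apply, Finset.mul_sum, Pi.one_apply, one_mul]
    refine Finset.sum_congr rfl fun i _ => ?_
    rcases lt_or_ge (i : ℕ) ν with h | h
    · simp [hw, h]
    · simp [hvar1 m hm i h]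
  have hl2 : ∀ x ∈ exponentPoints P₂, weightForm w x = d₁ * weightForm 1 x := by
    rintro _ ⟨m, hm, rfl⟩
    simp only [weightForm_apply, Finset.mul_sum, Pi.one_apply, one_mul]
    refine Finset.sum_congr rfl fun i _ => ?_
    rcases lt_or_ge (i : ℕ) ν with h | h
    · simp [hvar2 m hm i h]
    · simp [hw, h.not_gt]
  have hle : ∀ x ∈ exponentPoints P, weightForm w x ≤ (d₁ : ℝ) * d₂ := by
    rw [hS]
    rintro x (hx | hx)
    · rw [hl1 x hx, mul_comm (d₁ : ℝ)]
      exact mul_le_mul_of_nonneg_left (exponentPoints_sum_le _ x hx) hd2.le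
    · rw [hl2 x hx]
      exact mul_le_mul_of_nonneg_left (exponentPoints_sum_le _ x hx) hd1.le
  have htop : exponentPoints P ∩ {x | weightForm w x = (d₁ : ℝ) * d₂} =
      (exponentPoints P₁ ∩ {x | weightForm 1 x = (d₁ : ℝ)}) ∪
        (exponentPoints P₂ ∩ {x | weightForm 1 x = (d₂ : ℝ)}) := by
    rw [hS, Set.union_inter_distrib_right]
    congr 1
    · ext x
      refine and_congr_right fun hx => ?_
      rw [Set.mem_ofPred_eq, Set.mem_ofPred_eq, hl1 x hx, mul_comm (d₁ : ℝ),
        mul_right_inj' hd2.ne']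
    · ext x
      refine and_congr_right fun hx => ?_
      rw [Set.mem_ofPred_eq, Set.mem_ofPred_eq, hl2 x hx, mul_right_inj' hd1.ne']
  have hne1 := exists_exponentPoint_sum_eq P₁ hnc1
  have hne2 := exists_exponentPoint_sum_eq P₂ hnc2
  have hcut : newtonPolytope P ∩ {x | weightForm w x = (d₁ : ℝ) * d₂} =
      convexHull ℝ ((exponentPoints P₁ ∩ {x | weightForm 1 x = (d₁ : ℝ)}) ∪
        (exponentPoints P₂ ∩ {x | weightForm 1 x = (d₂ : ℝ)})) := by
    rw [← htop]
    exact convexHull_inter_level (exponentPoints_finite P) _ hle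
  rw [Set.inter_comm, hH]
  refine ⟨⟨w, (d₁ : ℝ) * d₂, ?_, ?_, Or.inl (le_on_convexHull (weightForm w) hle), rfl⟩, ?_⟩
  · intro h0
    have h := congrFun h0 ⟨0, by omega⟩
    have hν : 0 < ν := hν1
    simp [hw, hν] at h
    exact hd2.ne' (by exact_mod_cast h)
  · change (newtonPolytope P ∩ {x | weightForm w x = (d₁ : ℝ) * d₂}).Nonempty
    rw [hcut, convexHull_nonempty_iff]
    exact hne1.inl
  · rw [hcut, convexHull_union hne1 hne2, convexHull_top_vertices P₁, convexHull_top_vertices P₂]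
    ext x
    simp only [mem_convexJoin, Set.mem_ofPred_eq]
    constructor
    · rintro ⟨a, ha, b, hb, s, t, hs, ht, hst, rfl⟩
      refine ⟨s, ⟨hs, by linarith⟩, a, ha, b, hb, ?_⟩
      rw [← hst, add_sub_cancel_left]
    · rintro ⟨t, ⟨h0, h1⟩, a, ha, b, hb, rfl⟩
      exact ⟨a, ha, b, hb, t, 1 - t, h0, by linarith, by ring, rfl⟩
end

section
/- Let n ≥ 2 and 1 ≤ ν ≤ n−1. Let P = P₁ + P₂ where P₁ ∈ ℂ[z₁,…,z_ν] and P₂ ∈ ℂ[z_{ν+1},…,zₙ] are nonconstant polynomials depending on disjoint sets of variables with P₁(0) = P₂(0) = 0; write d₁ = deg P₁, d₂ = deg P₂. Let 𝔄ⱼ (j = 1,2) be the set of vertices v of N(Pⱼ) with Σᵢ vᵢ = dⱼ, let 𝔄₁₁ = {v ∈ 𝔄₁ : v₁ ≥ w₁ for all w ∈ 𝔄₁}, and let v₁ denote the first coordinate of any element of 𝔄₁₁. Set C₀ = { tα + (1−t)β : t ∈ [0,1], α ∈ conv(𝔄₁), β ∈ conv(𝔄₂) }, C₁ = { tα + (1−t)β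 : t ∈ [0,1], α ∈ conv(𝔄₁₁), β ∈ conv(𝔄₂) }, and H₁ = {x ∈ ℝⁿ : d₂ x₁ + (Σ_{j=1}^{n−ν} x_{ν+j}) v₁ = v₁ d₂}. Then C₀ ∩ H₁ = C₁ and C₁ is a face of C₀. -/
/-!
Consider the functional `f x = d₂ x₁ + v₁ ∑_{i > ν} xᵢ`, with `H₁ = {f = v₁ d₂}`. The polynomials
involve disjoint variables, so on a point `t α + (1 - t) β` of `C₀` it takes the value
`t d₂ α₁ + (1 - t) v₁ d₂`. As `α₁ ≤ v₁` on `conv A₁`, this is at most `v₁ d₂`, with equality exactly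
when `t = 0` or `α₁ = v₁`. In the second case `α ∈ conv A₁₁` by
`mem_convexHull_inter_of_eq_max` (the points of a convex hull that maximize a linear functional are
in the hull of the maximizing generators); in the first case `α` may be replaced by any point of
`A₁₁`. Hence `C₀ ∩ H₁ = C₁`, and `H₁` supports `C₀` once `C₁` is known to be nonempty. This last
point needs `A₂ ≠ ∅`, which is `exists_vertex_totalDegree`: the face of the Newton polytope on which
the coordinate sum is maximal is compact, so it has an extreme point, and that is a vertex of the
whole polytope.
-/


open Pointwise

/-- The points of `conv A` at which a linear functional bounded by `c` on `A` attains the value `c`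
are in the convex hull of the points of `A` at which it does. -/
lemma mem_convexHull_inter_of_eq_max {E : Type*} [AddCommGroup E] [Module ℝ E]
    (f : E →ₗ[ℝ] ℝ) (c : ℝ) (A : Set E) (hA : ∀ a ∈ A, f a ≤ c) {x : E}
    (hx : x ∈ convexHull ℝ A) :
    f x ≤ c ∧ (f x = c → x ∈ convexHull ℝ {a ∈ A | f a = c}) := by
  -- The set of points with the asserted property contains `A` and is convex.
  have hconv : Convex ℝ {x | f x ≤ c ∧ (f x = c → x ∈ convexHull ℝ {a ∈ A | f a = c})} := by
    rw [convex_iff_forall_pos]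
    rintro x ⟨hx1, hx2⟩ y ⟨hy1, hy2⟩ a b ha hb hab
    have hxa := mul_le_mul_of_nonneg_left hx1 ha.le
    have hyb := mul_le_mul_of_nonneg_left hy1 hb.le
    have hc : a * c + b * c = c := by rw [← add_mul, hab, one_mul]
    simp only [Set.mem_ofPred_eq, map_add, map_smul, smul_eq_mul]
    refine ⟨by linarith, fun h => ?_⟩
    have e1 : f x = c := mul_left_cancel₀ ha.ne' (by linarith)
    have e2 : f y = c := mul_left_cancel₀ hb.ne' (by linarith)
    exact convex_convexHull ℝ _ (hx2 e1) (hy2 e2) ha.le hb.le hab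
  refine convexHull_min ?_ hconv hx
  intro a ha
  exact ⟨hA a ha, fun h => subset_convexHull ℝ {a ∈ A | f a = c} ⟨ha, h⟩⟩

lemma newtonPolytope_coord_eq_zero {n : ℕ} {P : MvPolynomial (Fin n) ℂ} {i : Fin n}
    (h : ∀ m ∈ P.support, m i = 0) {x : Fin n → ℝ} (hx : x ∈ newtonPolytope P) : x i = 0 := by
  have hconv : Convex ℝ {x : Fin n → ℝ | x i = 0} :=
    convex_hyperplane (LinearMap.proj (R := ℝ) (φ := fun _ : Fin n => ℝ) i).isLinear 0
  refine convexHull_min ?_ hconv hx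
  rintro _ ⟨m, hm, rfl⟩
  simp [h m hm]

/-- Some vertex of the Newton polytope has coordinate sum equal to the total degree. -/
lemma exists_vertex_totalDegree {n : ℕ} (P : MvPolynomial (Fin n) ℂ) (hP : P ≠ 0) :
    ∃ v, IsVertex (newtonPolytope P) v ∧ ∑ i, v i = (P.totalDegree : ℝ) := by
  let l : (Fin n → ℝ) →L[ℝ] ℝ := ∑ i, ContinuousLinearMap.proj i
  have hl : ∀ x, l x = ∑ i, x i := fun x => by simp [l]
  have hle : ∀ x ∈ newtonPolytope P, l x ≤ P.totalDegree := by
    intro x hx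
    refine (mem_convexHull_inter_of_eq_max l.toLinearMap _ _ ?_ hx).1
    rintro _ ⟨m, hm, rfl⟩
    have h := MvPolynomial.le_totalDegree hm
    rw [Finsupp.sum_fintype _ _ (fun _ => rfl)] at h
    simpa [hl] using (by exact_mod_cast h : ((∑ i, m i : ℕ) : ℝ) ≤ P.totalDegree)
  -- A monomial of top degree shows that the bound is attained.
  obtain ⟨m, hm, hmd⟩ := Finset.exists_mem_eq_sup P.support
    (MvPolynomial.support_nonempty.mpr hP) (fun s => s.sum fun _ e => e)
  have hmN : (fun i => (m i : ℝ)) ∈ newtonPolytope P := subset_convexHull ℝ _ ⟨m, hm, rfl⟩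
  have hml : l (fun i => (m i : ℝ)) = P.totalDegree := by
    have h : P.totalDegree = ∑ i, m i := by
      rw [MvPolynomial.totalDegree, hmd, Finsupp.sum_fintype _ _ (fun _ => rfl)]
    rw [hl, h]; push_cast; rfl
  have hcomp : IsCompact (newtonPolytope P) :=
    (P.support.finite_toSet.image _).isCompact_convexHull ℝ
  have hexp : IsExposed ℝ (newtonPolytope P) (l.toExposed (newtonPolytope P)) :=
    ContinuousLinearMap.toExposed.isExposed
  have hne : (l.toExposed (newtonPolytope P)).Nonempty :=
    ⟨_, hmN, fun y hy => by rw [hml]; exact hle y hy⟩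
  obtain ⟨v, hv⟩ := (hexp.isCompact hcomp).extremePoints_nonempty hne
  have hvF := extremePoints_subset hv
  have hvN := hexp.isExtreme.extremePoints_subset_extremePoints hv
  refine ⟨v, ⟨hvF.1, ?_⟩, ?_⟩
  · rintro ⟨a, ha, b, hb, hab, hvab⟩
    obtain ⟨h1, h2⟩ := (mem_extremePoints.1 hvN).2 a ha b hb hvab
    exact hab (h1.trans h2.symm)
  · rw [← hl]
    exact le_antisymm (hle v hvF.1) (hml ▸ hvF.2 _ hmN)

/-- **Lemma.** With `C₀ = H₀ ∩ N(P)` as in the previous proposition,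
`C₀ ∩ H₁ = C₁` and `C₁` is a face of `C₀`. -/
theorem first_coordinate_face
    (n ν : ℕ) (hn : 2 ≤ n) (hν1 : 1 ≤ ν) (hν2 : ν ≤ n - 1)
    (P P₁ P₂ : MvPolynomial (Fin n) ℂ)
    (hsum : P = P₁ + P₂)
    (hvar1 : ∀ m ∈ P₁.support, ∀ i : Fin n, ν ≤ (i : ℕ) → m i = 0)
    (hvar2 : ∀ m ∈ P₂.support, ∀ i : Fin n, (i : ℕ) < ν → m i = 0)
    (hnc1 : 0 < P₁.totalDegree) (hnc2 : 0 < P₂.totalDegree)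
    (h01 : MvPolynomial.coeff 0 P₁ = 0) (h02 : MvPolynomial.coeff 0 P₂ = 0)
    (d₁ d₂ : ℕ) (hd1 : d₁ = P₁.totalDegree) (hd2 : d₂ = P₂.totalDegree)
    (A₁ A₂ A₁₁ : Set (Fin n → ℝ))
    (hA1 : A₁ = {v : Fin n → ℝ | IsVertex (newtonPolytope P₁) v ∧ ∑ i, v i = (d₁ : ℝ)})
    (hA2 : A₂ = {v : Fin n → ℝ | IsVertex (newtonPolytope P₂) v ∧ ∑ i, v i = (d₂ : ℝ)})
    (hA11 : A₁₁ = {v ∈ A₁ | ∀ w ∈ A₁, w ⟨0, by omega⟩ ≤ v ⟨0, by omega⟩})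
    (v₁ : ℝ) (hv1 : ∃ w ∈ A₁₁, w ⟨0, by omega⟩ = v₁)
    (C₀ C₁ H₁ : Set (Fin n → ℝ))
    (hC0 : C₀ = {x : Fin n → ℝ | ∃ t ∈ Set.Icc (0 : ℝ) 1, ∃ α ∈ convexHull ℝ A₁,
      ∃ β ∈ convexHull ℝ A₂, x = t • α + (1 - t) • β})
    (hC1 : C₁ = {x : Fin n → ℝ | ∃ t ∈ Set.Icc (0 : ℝ) 1, ∃ α ∈ convexHull ℝ A₁₁,
      ∃ β ∈ convexHull ℝ A₂, x = t • α + (1 - t) • β})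
    (hH1 : H₁ = {x : Fin n → ℝ |
      (d₂ : ℝ) * x ⟨0, by omega⟩ +
        (∑ i ∈ Finset.univ.filter (fun i : Fin n => ν ≤ (i : ℕ)), x i) * v₁ = v₁ * (d₂ : ℝ)}) :
    C₀ ∩ H₁ = C₁ ∧ IsFace C₀ C₁ := by
  have h0ν : ((⟨0, by omega⟩ : Fin n) : ℕ) < ν := by simp; omega
  set i0 : Fin n := ⟨0, by omega⟩ with hi0
  have hd2pos : (0 : ℝ) < d₂ := by rw [hd2]; exact_mod_cast hnc2
  obtain ⟨w, hwA, hwv⟩ := hv1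
  have hwA1 : w ∈ A₁ ∧ ∀ u ∈ A₁, u i0 ≤ w i0 := by rw [hA11] at hwA; exact hwA
  have hA11_sub : A₁₁ ⊆ A₁ := by rw [hA11]; exact fun v hv => hv.1
  have hA2ne : A₂.Nonempty := by
    have hP2 : P₂ ≠ 0 := by rintro rfl; simp at hnc2
    obtain ⟨v, hv⟩ := exists_vertex_totalDegree P₂ hP2
    exact ⟨v, by rw [hA2, hd2]; exact hv⟩
  have hN1 : convexHull ℝ A₁ ⊆ newtonPolytope P₁ :=
    convexHull_min (by rw [hA1]; exact fun v hv => hv.1.1) (convex_convexHull ℝ _)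
  have hN2 : convexHull ℝ A₂ ⊆ newtonPolytope P₂ :=
    convexHull_min (by rw [hA2]; exact fun v hv => hv.1.1) (convex_convexHull ℝ _)
  let p0 : (Fin n → ℝ) →ₗ[ℝ] ℝ := LinearMap.proj i0
  have hmax : ∀ α ∈ convexHull ℝ A₁,
      α i0 ≤ v₁ ∧ (α i0 = v₁ → α ∈ convexHull ℝ A₁₁) := by
    intro α hα
    have h := mem_convexHull_inter_of_eq_max p0 v₁ A₁
      (fun a ha => hwv ▸ hwA1.2 a ha) hα
    refine ⟨h.1, fun h' => convexHull_mono ?_ (h.2 h')⟩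
    rintro a ⟨ha, hav⟩
    rw [hA11]
    exact ⟨ha, fun u hu => (hwA1.2 u hu).trans (le_of_eq (hwv.trans hav.symm))⟩
  have hmax1 : ∀ α ∈ convexHull ℝ A₁₁, α i0 = v₁ := by
    intro α hα
    have hconv : Convex ℝ {x : Fin n → ℝ | x i0 = v₁} := convex_hyperplane p0.isLinear v₁
    refine convexHull_min ?_ hconv hα
    intro a ha
    have ha' : a ∈ A₁ ∧ ∀ u ∈ A₁, u i0 ≤ a i0 := by rw [hA11] at ha; exact ha
    exact hwv ▸ le_antisymm (hwA1.2 a ha'.1) (ha'.2 w hwA1.1)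
  have hα0 : ∀ α ∈ convexHull ℝ A₁,
      ∑ i ∈ Finset.univ.filter (fun i : Fin n => ν ≤ (i : ℕ)), α i = 0 := fun α hα =>
    Finset.sum_eq_zero fun i hi => newtonPolytope_coord_eq_zero
      (fun m hm => hvar1 m hm i (Finset.mem_filter.1 hi).2) (hN1 hα)
  have hβ0 : ∀ β ∈ convexHull ℝ A₂, ∀ i : Fin n, (i : ℕ) < ν → β i = 0 := fun β hβ i hi =>
    newtonPolytope_coord_eq_zero (fun m hm => hvar2 m hm i hi) (hN2 hβ)
  have hβs : ∀ β ∈ convexHull ℝ A₂,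
      ∑ i ∈ Finset.univ.filter (fun i : Fin n => ν ≤ (i : ℕ)), β i = d₂ := by
    intro β hβ
    have hconv : Convex ℝ {x : Fin n → ℝ | ∑ i, x i = d₂} := by
      have := convex_hyperplane
        (∑ i, LinearMap.proj i : (Fin n → ℝ) →ₗ[ℝ] ℝ).isLinear (d₂ : ℝ)
      simpa using this
    have hs : ∑ i, β i = d₂ :=
      convexHull_min (by rw [hA2]; exact fun v hv => hv.2) hconv hβ
    rw [← hs]
    refine Finset.sum_subset (Finset.filter_subset _ _) fun i _ hi => hβ0 β hβ i ?_
    simpa using hi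
  -- The value of the functional defining `H₁` on a point of `C₀`.
  have hval : ∀ t : ℝ, ∀ α ∈ convexHull ℝ A₁, ∀ β ∈ convexHull ℝ A₂,
      (d₂ : ℝ) * (t • α + (1 - t) • β) i0 +
        (∑ i ∈ Finset.univ.filter (fun i : Fin n => ν ≤ (i : ℕ)),
          (t • α + (1 - t) • β) i) * v₁ = t * d₂ * α i0 + (1 - t) * (v₁ * d₂) := by
    intro t α hα β hβ
    simp only [Pi.add_apply, Pi.smul_apply, smul_eq_mul, Finset.sum_add_distrib,
      ← Finset.mul_sum, hα0 α hα, hβs β hβ, hβ0 β hβ i0 h0ν]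
    ring
  have hmain : C₀ ∩ H₁ = C₁ := by
    rw [hC0, hC1, hH1]
    ext x
    constructor
    · rintro ⟨⟨t, ht, α, hα, β, hβ, rfl⟩, hH⟩
      have hH' := (hval t α hα β hβ).symm.trans hH
      rcases eq_or_ne t 0 with rfl | ht0
      -- At `t = 0` the point is `β`, so any element of `A₁₁` can play the role of `α`.
      · exact ⟨0, ht, w, subset_convexHull ℝ _ hwA, β, hβ, by simp⟩
      · refine ⟨t, ht, α, (hmax α hα).2 ?_, β, hβ, rfl⟩
        exact mul_left_cancel₀ (mul_ne_zero ht0 hd2pos.ne') (by linarith)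
    · rintro ⟨t, ht, α, hα, β, hβ, rfl⟩
      have hα' := convexHull_mono hA11_sub hα
      refine ⟨⟨t, ht, α, hα', β, hβ, rfl⟩, ?_⟩
      refine (hval t α hα' β hβ).trans ?_
      rw [hmax1 α hα]; ring
  refine ⟨hmain, fun i => (if i = i0 then (d₂ : ℝ) else 0) + (if ν ≤ (i : ℕ) then v₁ else 0),
    v₁ * d₂, ?_, ?_⟩
  -- The normal vector is nonzero: its first entry is `d₂ > 0`.
  · intro h
    have h' := congrFun h i0
    simp only [if_true, if_neg (not_le.2 h0ν), add_zero, Pi.zero_apply] at h'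
    exact hd2pos.ne' h'
  · have hsum' : ∀ x : Fin n → ℝ,
        ∑ i, ((if i = i0 then (d₂ : ℝ) else 0) + (if ν ≤ (i : ℕ) then v₁ else 0)) * x i =
        (d₂ : ℝ) * x i0 +
          (∑ i ∈ Finset.univ.filter (fun i : Fin n => ν ≤ (i : ℕ)), x i) * v₁ := by
      intro x
      simp only [add_mul, Finset.sum_add_distrib, ite_mul, zero_mul, Finset.sum_ite_eq',
        Finset.mem_univ, if_true, Finset.sum_filter, Finset.sum_mul]
      simp only [mul_comm]
    simp only [hsum']
    rw [← hH1, hmain]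
    refine ⟨?_, Or.inl ?_, rfl⟩
    · obtain ⟨β, hβ⟩ := hA2ne
      rw [hC1]
      exact ⟨_, 1, ⟨zero_le_one, le_rfl⟩, w, subset_convexHull ℝ _ hwA, β,
        subset_convexHull ℝ _ hβ, rfl⟩
    · rw [hC0]
      rintro _ ⟨t, ht, α, hα, β, hβ, rfl⟩
      rw [hval t α hα β hβ]
      have := mul_le_mul_of_nonneg_left (hmax α hα).1 (mul_nonneg ht.1 hd2pos.le)
      linarith
end

section
/- Let n ≥ 2 and 1 ≤ ν ≤ n−1. Let P = P₁ + P₂ where P₁ ∈ ℂ[z₁,…,z_ν] and P₂ ∈ ℂ[z_{ν+1},…,zₙ] are nonconstant polynomials depending on disjoint sets of variables with P₁(0) = 0 and P₂(0) = 0. If gcd(deg P₁, deg P₂) = 1, then the Newton polytope N(P) is integrally indecomposable. -/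
/-!
Write `p` and `q` for the sums of the coordinates in the first and in the second block of
variables, and put `a = deg P₁`, `b = deg P₂`. Every point of `N = N(P)` has nonnegative
coordinates and satisfies `p ≤ a`, `q ≤ b` and `b p + a q ≤ a b`; the points `(p, q) = (a, 0)` and
`(0, b)` are both attained, by monomials of top degree of `P₁` and of `P₂`.

Let `N = A + B` with `A`, `B` integral. Maximising `2 b p + a q` over `A` and over `B` separately
gives integral points `α₁ ∈ A`, `β₁ ∈ B` with `(p, q)(α₁ + β₁) = (a, 0)`; similarly
`(p, q)(α₂ + β₂) = (0, b)` for integral `α₂ ∈ A`, `β₂ ∈ B`. The form `b p + a q` is maximal on `N`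
at both sums, so it takes the same value at `α₁` and `α₂`, and coprimality of `a` and `b` forces
`(p, q)(α₁ - α₂) = s (a, -b)` with `s` an integer. Nonnegativity of `p` on `N` leaves only
`s = 0` and `s = 1`, so `p` agrees on `α₁, α₂` or on `β₁, β₂`
(`blockSum_eq_or_eq`).

If, say, `p β₁ = p β₂`, then `B` is a single point (`summand_eq`): adding `y ∈ B` to `α₁`, whose sum
with `β₁` vanishes on the second block, shows that `y ≥ β₁` there; likewise `y ≥ β₂` on the first
block; and the bound on `b p + a q` turns all these inequalities into equalities.
-/

open Pointwise

/-- The linear functional summing the coordinates whose index lies in `s`. -/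
def blockSum {n : ℕ} (s : Finset (Fin n)) : (Fin n → ℝ) →ₗ[ℝ] ℝ :=
  ∑ i ∈ s, LinearMap.proj i

lemma blockSum_apply {n : ℕ} (s : Finset (Fin n)) (x : Fin n → ℝ) :
    blockSum s x = ∑ i ∈ s, x i := by
  simp [blockSum]

lemma le_of_mem_convexHull {n : ℕ} {F : Set (Fin n → ℝ)} (f : (Fin n → ℝ) →ₗ[ℝ] ℝ) (c : ℝ)
    (h : ∀ x ∈ F, f x ≤ c) : ∀ x ∈ convexHull ℝ F, f x ≤ c := by
  intro x hx
  have : convexHull ℝ F ⊆ {w | f w ≤ c} :=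
    convexHull_min (fun y hy => h y hy) (convex_halfSpace_le f.isLinear c)
  exact this hx

/-- A linear functional attains its maximum over an integral polytope at an integral point. -/
lemma exists_integral_max {n : ℕ} {A : Set (Fin n → ℝ)} (hA : IsIntegralPolytope A)
    (f : (Fin n → ℝ) →ₗ[ℝ] ℝ) :
    ∃ x ∈ A, (∀ i, ∃ k : ℤ, x i = (k : ℝ)) ∧ ∀ y ∈ A, f y ≤ f x := by
  obtain ⟨F, hne, hint, rfl⟩ := hA
  obtain ⟨x, hx, hmax⟩ := F.exists_max_image f hne
  exact ⟨x, subset_convexHull ℝ _ hx, hint x hx, le_of_mem_convexHull f _ hmax⟩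

lemma blockSum_integral {n : ℕ} (s : Finset (Fin n)) {x : Fin n → ℝ}
    (hx : ∀ i, ∃ k : ℤ, x i = (k : ℝ)) : ∃ k : ℤ, blockSum s x = (k : ℝ) := by
  choose k hk using hx
  exact ⟨∑ i ∈ s, k i, by rw [blockSum_apply]; push_cast; exact Finset.sum_congr rfl fun i _ => hk i⟩

/-- If the first block sum agrees on `β₁` and `β₂`, the summand `B` is a single point. -/
lemma summand_eq {n : ℕ} (s : Finset (Fin n)) (a b : ℝ) (ha : 0 < a) (hb : 0 < b)
    {A B : Set (Fin n → ℝ)}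
    (hpos : ∀ x ∈ A, ∀ y ∈ B, ∀ i, 0 ≤ x i + y i)
    (hl : ∀ x ∈ A, ∀ y ∈ B, b * (blockSum s x + blockSum s y)
      + a * (blockSum sᶜ x + blockSum sᶜ y) ≤ a * b)
    {α₁ α₂ β₁ β₂ : Fin n → ℝ} (hα₁ : α₁ ∈ A) (hα₂ : α₂ ∈ A) (hβ₁ : β₁ ∈ B) (hβ₂ : β₂ ∈ B)
    (hp1 : blockSum s α₁ + blockSum s β₁ = a) (hq1 : blockSum sᶜ α₁ + blockSum sᶜ β₁ = 0)
    (hp2 : blockSum s α₂ + blockSum s β₂ = 0)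
    (heq : blockSum s β₁ = blockSum s β₂) (y : Fin n → ℝ) (hy : y ∈ B) :
    y = fun i => if i ∈ s then β₂ i else β₁ i := by
  have z1 : ∀ i ∈ sᶜ, α₁ i + β₁ i = 0 := by
    refine (Finset.sum_eq_zero_iff_of_nonneg fun i _ => hpos α₁ hα₁ β₁ hβ₁ i).1 ?_
    rw [Finset.sum_add_distrib, ← blockSum_apply, ← blockSum_apply, hq1]
  have z2 : ∀ i ∈ s, α₂ i + β₂ i = 0 := by
    refine (Finset.sum_eq_zero_iff_of_nonneg fun i _ => hpos α₂ hα₂ β₂ hβ₂ i).1 ?_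
    rw [Finset.sum_add_distrib, ← blockSum_apply, ← blockSum_apply, hp2]
  have g1 : ∀ i ∈ sᶜ, β₁ i ≤ y i := fun i hi => by
    linarith [z1 i hi, hpos α₁ hα₁ y hy i]
  have g2 : ∀ i ∈ s, β₂ i ≤ y i := fun i hi => by
    linarith [z2 i hi, hpos α₂ hα₂ y hy i]
  have s1 := Finset.sum_le_sum g1
  have s2 := Finset.sum_le_sum g2
  simp only [← blockSum_apply] at s1 s2
  have hly := hl α₁ hα₁ y hy
  have e : b * (blockSum s y - blockSum s β₂) + a * (blockSum sᶜ y - blockSum sᶜ β₁) ≤ 0 := by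
    rw [← heq]
    linear_combination hly - b * hp1 - a * hq1
  have m1 : 0 ≤ b * (blockSum s y - blockSum s β₂) := mul_nonneg hb.le (by linarith)
  have m2 : 0 ≤ a * (blockSum sᶜ y - blockSum sᶜ β₁) := mul_nonneg ha.le (by linarith)
  have e1 : blockSum s β₂ = blockSum s y := by
    have : b * (blockSum s y - blockSum s β₂) = 0 := by linarith
    rcases mul_eq_zero.1 this with h | h <;> linarith
  have e2 : blockSum sᶜ β₁ = blockSum sᶜ y := by
    have : a * (blockSum sᶜ y - blockSum sᶜ β₁) = 0 := by linarith
    rcases mul_eq_zero.1 this with h | h <;> linarith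
  rw [blockSum_apply, blockSum_apply] at e1 e2
  have f1 := (Finset.sum_eq_sum_iff_of_le g2).1 e1
  have f2 := (Finset.sum_eq_sum_iff_of_le g1).1 e2
  funext i
  by_cases hi : i ∈ s
  · simp [hi, f1 i hi]
  · simp [hi, f2 i (by simpa using hi)]

/-- The segment from `(a, 0)` to `(0, b)` is primitive when `a` and `b` are coprime, so
an integral decomposition of it is constant on one of the two summands. The arguments are the block
sums of `α₁, α₂, β₁, β₂`. -/
lemma blockSum_eq_or_eq (a b : ℕ) (ha : 0 < a) (hgcd : Nat.gcd a b = 1)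
    (pα₁ pα₂ pβ₁ pβ₂ qα₁ qα₂ : ℤ)
    (hp1 : pα₁ + pβ₁ = a) (hp2 : pα₂ + pβ₂ = 0)
    (hl : b * pα₁ + a * qα₁ = b * pα₂ + a * qα₂)
    (h12 : 0 ≤ pα₁ + pβ₂) (h21 : 0 ≤ pα₂ + pβ₁) :
    pα₁ = pα₂ ∨ pβ₁ = pβ₂ := by
  have hd : (a : ℤ) ∣ pα₁ - pα₂ := by
    have h1 : (a : ℤ) ∣ b * (pα₁ - pα₂) := ⟨qα₂ - qα₁, by linear_combination hl⟩
    exact (Int.isCoprime_iff_gcd_eq_one.2 (by simpa using hgcd)).dvd_of_dvd_mul_left h1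
  obtain ⟨t, ht⟩ := hd
  have ha' : (0 : ℤ) < a := by exact_mod_cast ha
  have t0 : 0 ≤ t := by
    by_contra! h
    nlinarith
  have t1 : t ≤ 1 := by
    by_contra! h
    nlinarith
  obtain rfl | rfl : t = 0 ∨ t = 1 := by omega
  · left; linarith
  · right; linarith

/-- If `P = P₁ + P₂` where `P₁ ∈ ℂ[z₁,…,z_ν]` and `P₂ ∈ ℂ[z_{ν+1},…,zₙ]` are nonconstant
with `P₁(0) = 0`, `P₂(0) = 0`, and `gcd(deg P₁, deg P₂) = 1`, then `N(P)` is integrally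
indecomposable. -/
theorem newtonPolytope_indecomposable_of_coprime_degrees
    (n ν : ℕ) (hn : 2 ≤ n) (hν1 : 1 ≤ ν) (hν2 : ν ≤ n - 1)
    (P P₁ P₂ : MvPolynomial (Fin n) ℂ)
    (hsum : P = P₁ + P₂)
    (hvar1 : ∀ m ∈ P₁.support, ∀ i : Fin n, ν ≤ (i : ℕ) → m i = 0)
    (hvar2 : ∀ m ∈ P₂.support, ∀ i : Fin n, (i : ℕ) < ν → m i = 0)
    (hnc1 : 0 < P₁.totalDegree) (hnc2 : 0 < P₂.totalDegree)
    (h01 : MvPolynomial.coeff 0 P₁ = 0) (h02 : MvPolynomial.coeff 0 P₂ = 0)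
    (hgcd : Nat.gcd P₁.totalDegree P₂.totalDegree = 1) :
    ¬ IntegrallyDecomposable (newtonPolytope P) := by
  rintro ⟨A, B, hA, hB, ⟨x, hx, x', hx', hxx⟩, ⟨y, hy, y', hy', hyy⟩, hN⟩
  set a := P₁.totalDegree with ha
  set b := P₂.totalDegree with hb
  have ha0 : (0 : ℝ) < a := by exact_mod_cast hnc1
  have hb0 : (0 : ℝ) < b := by exact_mod_cast hnc2
  set s : Finset (Fin n) := Finset.univ.filter (fun i => (i : ℕ) < ν) with hs
  let φ : (Fin n →₀ ℕ) → (Fin n → ℝ) := fun m i => (m i : ℝ)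
  have hdeg : ∀ m : Fin n →₀ ℕ, blockSum s (φ m) + blockSum sᶜ (φ m) = (m.degree : ℝ) := by
    intro m
    rw [blockSum_apply, blockSum_apply, Finset.sum_add_sum_compl, Finsupp.degree_eq_sum]
    simp [φ]
  have hq1 : ∀ m ∈ P₁.support, blockSum sᶜ (φ m) = 0 := by
    intro m hm
    rw [blockSum_apply]
    refine Finset.sum_eq_zero fun i hi => ?_
    simp [φ, hvar1 m hm i (by simpa [hs] using hi)]
  have hp2 : ∀ m ∈ P₂.support, blockSum s (φ m) = 0 := by
    intro m hm
    rw [blockSum_apply]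
    refine Finset.sum_eq_zero fun i hi => ?_
    simp [φ, hvar2 m hm i (by simpa [hs] using hi)]
  have hp1 : ∀ m ∈ P₁.support, blockSum s (φ m) = (m.degree : ℝ) := fun m hm => by
    linarith [hdeg m, hq1 m hm]
  have hq2 : ∀ m ∈ P₂.support, blockSum sᶜ (φ m) = (m.degree : ℝ) := fun m hm => by
    linarith [hdeg m, hp2 m hm]
  have hd1 : ∀ m ∈ P₁.support, (m.degree : ℝ) ≤ a := fun m hm => by
    exact_mod_cast MvPolynomial.le_totalDegree hm
  have hd2 : ∀ m ∈ P₂.support, (m.degree : ℝ) ≤ b := fun m hm => by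
    exact_mod_cast MvPolynomial.le_totalDegree hm
  have hbound : ∀ (f : (Fin n → ℝ) →ₗ[ℝ] ℝ) (c : ℝ), (∀ m ∈ P₁.support, f (φ m) ≤ c) →
      (∀ m ∈ P₂.support, f (φ m) ≤ c) → ∀ x ∈ A, ∀ y ∈ B, f x + f y ≤ c := by
    intro f c h1 h2 x hx y hy
    rw [← map_add]
    refine le_of_mem_convexHull f c ?_ (x + y) (hN ▸ Set.add_mem_add hx hy : _ ∈ newtonPolytope P)
    rintro _ ⟨m, hm, rfl⟩
    rw [hsum] at hm
    rcases Finset.mem_union.1 (MvPolynomial.support_add hm) with h | h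
    · exact h1 m h
    · exact h2 m h
  have hpos : ∀ x ∈ A, ∀ y ∈ B, ∀ i, 0 ≤ x i + y i := by
    intro x hx y hy i
    have := hbound (-LinearMap.proj i) 0 (fun m _ => by simp [φ]) (fun m _ => by simp [φ]) x hx y hy
    simp at this
    linarith
  have hpos' : ∀ t : Finset (Fin n), ∀ x ∈ A, ∀ y ∈ B, 0 ≤ blockSum t x + blockSum t y := by
    intro t x hx y hy
    rw [blockSum_apply, blockSum_apply, ← Finset.sum_add_distrib]
    exact Finset.sum_nonneg fun i _ => hpos x hx y hy i
  have hl : ∀ x ∈ A, ∀ y ∈ B, (b : ℝ) * (blockSum s x + blockSum s y)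
      + a * (blockSum sᶜ x + blockSum sᶜ y) ≤ a * b := by
    intro x hx y hy
    have := hbound ((b : ℝ) • blockSum s + (a : ℝ) • blockSum sᶜ) (a * b)
      (fun m hm => by
        simp [hp1 m hm, hq1 m hm]; nlinarith [hd1 m hm])
      (fun m hm => by
        simp [hp2 m hm, hq2 m hm]; nlinarith [hd2 m hm]) x hx y hy
    simp at this
    linarith
  have hpa : ∀ x ∈ A, ∀ y ∈ B, blockSum s x + blockSum s y ≤ a :=
    hbound (blockSum s) a (fun m hm => (hp1 m hm).trans_le (hd1 m hm))
      (fun m hm => (hp2 m hm).trans_le ha0.le)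
  have hqb : ∀ x ∈ A, ∀ y ∈ B, blockSum sᶜ x + blockSum sᶜ y ≤ b :=
    hbound (blockSum sᶜ) b (fun m hm => (hq1 m hm).trans_le hb0.le)
      (fun m hm => (hq2 m hm).trans_le (hd2 m hm))
  -- The two supports are disjoint because neither contains the zero exponent, so nothing cancels.
  have hdisj : ∀ m ∈ P₁.support, m ∉ P₂.support := by
    intro m h1 h2
    have : m = 0 := by
      ext i
      rcases lt_or_ge (i : ℕ) ν with h | h
      · exact hvar2 m h2 i h
      · exact hvar1 m h1 i h
    subst this
    exact MvPolynomial.mem_support_iff.1 h1 h01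
  have hmem : ∀ m, m ∈ P₁.support ∨ m ∈ P₂.support → ∃ x ∈ A, ∃ y ∈ B, x + y = φ m := by
    intro m hm
    have hmP : m ∈ P.support := by
      rw [hsum, MvPolynomial.mem_support_iff, MvPolynomial.coeff_add]
      rcases hm with h | h
      · rw [MvPolynomial.notMem_support_iff.1 (hdisj m h), add_zero]
        exact MvPolynomial.mem_support_iff.1 h
      · rw [MvPolynomial.notMem_support_iff.1 (fun h' => hdisj m h' h), zero_add]
        exact MvPolynomial.mem_support_iff.1 h
    have : φ m ∈ newtonPolytope P := subset_convexHull ℝ _ ⟨m, hmP, rfl⟩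
    rw [hN] at this
    exact Set.mem_add.1 this
  have htop : ∀ Q : MvPolynomial (Fin n) ℂ, 0 < Q.totalDegree →
      ∃ m ∈ Q.support, m.degree = Q.totalDegree := by
    intro Q hQ
    have hne : Q.support.Nonempty := by
      rw [Finset.nonempty_iff_ne_empty]
      intro h
      rw [MvPolynomial.support_eq_empty.1 h] at hQ
      simp at hQ
    obtain ⟨m, hm, h⟩ := Finset.exists_mem_eq_sup Q.support hne (fun m => m.sum fun _ e => e)
    exact ⟨m, hm, h.symm⟩
  obtain ⟨m₁, hm₁, hm₁d⟩ := htop P₁ hnc1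
  obtain ⟨m₂, hm₂, hm₂d⟩ := htop P₂ hnc2
  -- Integral points whose sum projects to `(a, 0)`, the unique maximum of `2 b p + a q`.
  let g₁ : (Fin n → ℝ) →ₗ[ℝ] ℝ := (2 * b : ℝ) • blockSum s + (a : ℝ) • blockSum sᶜ
  obtain ⟨α₁, hα₁, iα₁, xα₁⟩ := exists_integral_max hA g₁
  obtain ⟨β₁, hβ₁, iβ₁, xβ₁⟩ := exists_integral_max hB g₁
  have k1 : 2 * b * (a : ℝ) ≤ g₁ α₁ + g₁ β₁ := by
    obtain ⟨u, hu, w, hw, huw⟩ := hmem m₁ (Or.inl hm₁)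
    have h : g₁ u + g₁ w = 2 * b * (a : ℝ) := by
      rw [← map_add, huw]
      simp [g₁, hp1 m₁ hm₁, hq1 m₁ hm₁, hm₁d, ← ha]
    linarith [xα₁ u hu, xβ₁ w hw]
  have hp1' : blockSum s α₁ + blockSum s β₁ = a := by
    simp [g₁] at k1
    refine le_antisymm (hpa _ hα₁ _ hβ₁) ?_
    have := hl _ hα₁ _ hβ₁
    refine le_of_mul_le_mul_left ?_ hb0
    linarith
  have hq1' : blockSum sᶜ α₁ + blockSum sᶜ β₁ = 0 := by
    refine le_antisymm ?_ (hpos' _ _ hα₁ _ hβ₁)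
    have := hl _ hα₁ _ hβ₁
    rw [hp1'] at this
    refine le_of_mul_le_mul_left ?_ ha0
    linarith
  -- Likewise for `(0, b)`, the unique maximum of `b p + 2 a q`.
  let g₂ : (Fin n → ℝ) →ₗ[ℝ] ℝ := (b : ℝ) • blockSum s + (2 * a : ℝ) • blockSum sᶜ
  obtain ⟨α₂, hα₂, iα₂, xα₂⟩ := exists_integral_max hA g₂
  obtain ⟨β₂, hβ₂, iβ₂, xβ₂⟩ := exists_integral_max hB g₂
  have k2 : 2 * a * (b : ℝ) ≤ g₂ α₂ + g₂ β₂ := by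
    obtain ⟨u, hu, w, hw, huw⟩ := hmem m₂ (Or.inr hm₂)
    have h : g₂ u + g₂ w = 2 * a * (b : ℝ) := by
      rw [← map_add, huw]
      simp [g₂, hp2 m₂ hm₂, hq2 m₂ hm₂, hm₂d, ← hb]
    linarith [xα₂ u hu, xβ₂ w hw]
  have hq2' : blockSum sᶜ α₂ + blockSum sᶜ β₂ = b := by
    simp [g₂] at k2
    refine le_antisymm (hqb _ hα₂ _ hβ₂) ?_
    have := hl _ hα₂ _ hβ₂
    refine le_of_mul_le_mul_left ?_ ha0
    linarith
  have hp2' : blockSum s α₂ + blockSum s β₂ = 0 := by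
    refine le_antisymm ?_ (hpos' _ _ hα₂ _ hβ₂)
    have := hl _ hα₂ _ hβ₂
    rw [hq2'] at this
    refine le_of_mul_le_mul_left ?_ hb0
    linarith
  have hleq : (b : ℝ) * blockSum s α₁ + a * blockSum sᶜ α₁
      = b * blockSum s α₂ + a * blockSum sᶜ α₂ := by
    apply le_antisymm
    · linear_combination hl _ hα₁ _ hβ₂ - b * hp2' - a * hq2'
    · linear_combination hl _ hα₂ _ hβ₁ - b * hp1' - a * hq1'
  have h12 := hpos' s _ hα₁ _ hβ₂
  have h21 := hpos' s _ hα₂ _ hβ₁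
  have key : blockSum s α₁ = blockSum s α₂ ∨ blockSum s β₁ = blockSum s β₂ := by
    obtain ⟨k₁, e₁⟩ := blockSum_integral s iα₁
    obtain ⟨k₂, e₂⟩ := blockSum_integral s iα₂
    obtain ⟨k₃, e₃⟩ := blockSum_integral s iβ₁
    obtain ⟨k₄, e₄⟩ := blockSum_integral s iβ₂
    obtain ⟨k₅, e₅⟩ := blockSum_integral sᶜ iα₁
    obtain ⟨k₆, e₆⟩ := blockSum_integral sᶜ iα₂
    rw [e₁, e₂, e₅, e₆] at hleq
    rw [e₁, e₃] at hp1'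
    rw [e₂, e₄] at hp2'
    rw [e₁, e₄] at h12
    rw [e₂, e₃] at h21
    rw [e₁, e₂, e₃, e₄]
    exact_mod_cast blockSum_eq_or_eq a b hnc1 hgcd k₁ k₂ k₃ k₄ k₅ k₆ (by exact_mod_cast hp1')
      (by exact_mod_cast hp2') (by exact_mod_cast hleq) (by exact_mod_cast h12)
      (by exact_mod_cast h21)
  rcases key with h | h
  · -- The same argument applies with the roles of `A` and `B` exchanged.
    have := summand_eq s a b ha0 hb0 (A := B) (B := A)
      (fun u hu w hw i => by rw [add_comm]; exact hpos w hw u hu i)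
      (fun u hu w hw => by
        rw [add_comm (blockSum s u), add_comm (blockSum sᶜ u)]; exact hl w hw u hu)
      hβ₁ hβ₂ hα₁ hα₂ (by rw [add_comm]; exact hp1') (by rw [add_comm]; exact hq1')
      (by rw [add_comm]; exact hp2') h
    exact hxx ((this x hx).trans (this x' hx').symm)
  · have := summand_eq s a b ha0 hb0 hpos hl hα₁ hα₂ hβ₁ hβ₂ hp1' hq1' hp2' h
    exact hyy ((this y hy).trans (this y' hy').symm)
end

section
/- Let n ≥ 3 and let P₁ ∈ ℂ[z₁,z₂] be of the form P₁ = a z₁ⁿ' + b z₂ᵐ + c z₁ᵘ z₂ᵛ + Σ c_{ij} z₁ⁱ z₂ʲ with a, b, c ≠ 0, where n', m, u, v are positive integers satisfying u n' + m v ≠ m n', u + v > n' (i.e., c z₁ᵘ z₂ᵛ is the unique term of highest total degree in P₁), and for every (i,j) with c_{ij} ≠ 0: m i + n' j ≥ m n', v i − (u − n') j ≤ v n', and u j − (v − m) i ≤ m u. Let P₂ ∈ ℂ[z₃,…,zₙ] be any nonconstant polynomial. If gcd(m, n', u, v) = 1, then P = P₁ + P₂ is irreducible over ℂ. -/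
/-!
`P₁` alone is essentially irreducible, because of its Newton triangle with vertices
`A = (n', 0)`, `B = (0, m)`, `C = (u, v)`.  In a factorization `P₁ = f g` each vertex splits uniquely
as a sum of an exponent of `f` and an exponent of `g` (`exists_vertex_split`,
`vertex_split_unique`), and the two parts of adjacent vertices taken from `f` lie on a common line
parallel to the edge (`edge_split`).  The part of `A` in `f` is `(x, 0)` and that of `B` is `(0, y)`,
so the three edge relations force the triangle of `f` to be `x / n'` times that of `P₁`.  Integrality
of its vertices and `gcd (m, n', u, v) = 1` give `n' ∣ x`, hence `x = 0` or `x = n'`, so that one of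
the factors already contains the monomial `z₁ᵘ z₂ᵛ` (`triangle_top_mem`).

Now regard `P = P₁ + P₂` as a polynomial in `z₁, z₂` over `R = ℂ[z₃, …, zₙ]`, of total degree `u + v`
(`hmax` and `b ≠ 0` force `m < u + v`).  If `P = F G`, specialize `z₃, …, zₙ` at a zero of `P₂`: the
specialized factors multiply to `P₁`, so one of `F`, `G`, say `F`, has a monomial `z₁ᵘ z₂ᵛ` and thus
total degree at least `u + v`.  Hence `G ∈ R`, and `G` divides the coefficient `c` of
`z₁ᵘ z₂ᵛ` in `P`, a nonzero constant; so `G` is a unit.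
-/

open MvPolynomial

/-! ### Vertices of the Newton polytope of a product -/

/-- A vertex `A` of the Newton polytope of `f * g`, given as the minimum of an injective additive
function `D`, is the sum of the corresponding minima for `f` and `g`. -/
lemma exists_vertex_split {σ R Γ : Type*} [CommRing R] [IsDomain R]
    [AddCommMonoid Γ] [LinearOrder Γ] [IsOrderedCancelAddMonoid Γ]
    (D : (σ →₀ ℕ) → Γ) (hadd : ∀ a b, D (a + b) = D a + D b) (hinj : Function.Injective D)
    (f g : MvPolynomial σ R) (A : σ →₀ ℕ) (hA : A ∈ (f * g).support)
    (hmin : ∀ w ∈ (f * g).support, D A ≤ D w) :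
    ∃ a ∈ f.support, ∃ b ∈ g.support, a + b = A ∧
      (∀ w ∈ f.support, D a ≤ D w) ∧ (∀ w ∈ g.support, D b ≤ D w) := by
  classical
  have hne : f * g ≠ 0 := by
    rintro h
    simp [h] at hA
  have hf : f.support.Nonempty := by
    rw [Finset.nonempty_iff_ne_empty, Ne, support_eq_empty]
    exact left_ne_zero_of_mul hne
  have hg : g.support.Nonempty := by
    rw [Finset.nonempty_iff_ne_empty, Ne, support_eq_empty]
    exact right_ne_zero_of_mul hne
  obtain ⟨a, ha, ha'⟩ := Finset.exists_min_image f.support D hf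
  obtain ⟨b, hb, hb'⟩ := Finset.exists_min_image g.support D hg
  refine ⟨a, ha, b, hb, ?_, ha', hb'⟩
  have hcoef : coeff (a + b) (f * g) = coeff a f * coeff b g := by
    rw [coeff_mul]
    refine Finset.sum_eq_single (a, b) ?_ ?_
    · rintro ⟨x, y⟩ hxy hxy'
      rw [Finset.HasAntidiagonal.mem_antidiagonal] at hxy
      by_contra hprod
      have hx : x ∈ f.support := mem_support_iff.2 (left_ne_zero_of_mul hprod)
      have hy : y ∈ g.support := mem_support_iff.2 (right_ne_zero_of_mul hprod)
      have hs : D a + D b = D x + D y := by rw [← hadd, ← hadd]; exact congrArg D hxy.symm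
      have h1 := (add_eq_add_iff_eq_and_eq (ha' x hx) (hb' y hy)).1 hs
      exact hxy' (Prod.ext (hinj h1.1).symm (hinj h1.2).symm)
    · intro h
      simp [Finset.HasAntidiagonal.mem_antidiagonal] at h
  have hab : a + b ∈ (f * g).support := by
    rw [mem_support_iff, hcoef]
    exact mul_ne_zero (mem_support_iff.1 ha) (mem_support_iff.1 hb)
  obtain ⟨x, hx, y, hy, hxy⟩ := Finset.mem_add.1 (support_mul f g hA)
  apply hinj
  refine le_antisymm ?_ (hmin _ hab)
  rw [← hxy, hadd, hadd]
  exact add_le_add (ha' x hx) (hb' y hy)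

/-- If `a` and `b` are the minima of `D` on two sets, no other pair from these sets has sum
`a + b`. -/
lemma vertex_split_unique {M Γ : Type*} [Add M]
    [AddCommMonoid Γ] [LinearOrder Γ] [IsOrderedCancelAddMonoid Γ]
    (D : M → Γ) (hadd : ∀ a b, D (a + b) = D a + D b) (hinj : Function.Injective D)
    (S T : Set M) {a b x y : M} (ha : ∀ w ∈ S, D a ≤ D w) (hb : ∀ w ∈ T, D b ≤ D w)
    (hx : x ∈ S) (hy : y ∈ T) (h : a + b = x + y) : a = x := by
  have hs : D a + D b = D x + D y := by rw [← hadd, ← hadd, h]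
  exact hinj ((add_eq_add_iff_eq_and_eq (ha x hx) (hb y hy)).1 hs).1

/-! ### Two variables -/

/-- The pair of linear forms `(p i + q j, r i + s j)` on exponents `(i, j)`, with values in the
lexicographically ordered group `ℤ × ℤ`: the first form selects an edge of the Newton polygon and
the second one selects an end of this edge. -/
def lexForm (p q r s : ℤ) (w : Fin 2 →₀ ℕ) : ℤ ×ₗ ℤ :=
  toLex (p * w 0 + q * w 1, r * w 0 + s * w 1)

lemma lexForm_add (p q r s : ℤ) (a b : Fin 2 →₀ ℕ) :
    lexForm p q r s (a + b) = lexForm p q r s a + lexForm p q r s b := by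
  simp only [lexForm, ← toLex_add, Prod.mk_add_mk, Finsupp.add_apply, Nat.cast_add]
  congr 2 <;> ring

lemma lexForm_injective {p q r s : ℤ} (h : p * s - q * r ≠ 0) :
    Function.Injective (lexForm p q r s) := by
  intro a b hab
  simp only [lexForm, EmbeddingLike.apply_eq_iff_eq, Prod.mk.injEq] at hab
  obtain ⟨h1, h2⟩ := hab
  have e0 : (p * s - q * r) * ((a 0 : ℤ) - b 0) = 0 := by linear_combination s * h1 - q * h2
  have e1 : (p * s - q * r) * ((a 1 : ℤ) - b 1) = 0 := by linear_combination p * h2 - r * h1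
  have e0' := (mul_eq_zero.1 e0).resolve_left h
  have e1' := (mul_eq_zero.1 e1).resolve_left h
  ext i
  fin_cases i
  · simp only [Fin.zero_eta]; omega
  · simp only [Fin.mk_one]; omega

lemma lexForm_le {p q r s : ℤ} {a b : Fin 2 →₀ ℕ}
    (h1 : p * a 0 + q * a 1 ≤ p * b 0 + q * b 1)
    (h2 : p * a 0 + q * a 1 = p * b 0 + q * b 1 → r * a 0 + s * a 1 ≤ r * b 0 + s * b 1) :
    lexForm p q r s a ≤ lexForm p q r s b := by
  rw [lexForm, lexForm, Prod.Lex.toLex_le_toLex]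
  rcases h1.lt_or_eq with h | h
  · exact Or.inl h
  · exact Or.inr ⟨h, h2 h⟩

lemma fst_le_of_lexForm_le {p q r s : ℤ} {a b : Fin 2 →₀ ℕ}
    (h : lexForm p q r s a ≤ lexForm p q r s b) :
    p * a 0 + q * a 1 ≤ p * b 0 + q * b 1 := by
  rw [lexForm, lexForm, Prod.Lex.toLex_le_toLex] at h
  rcases h with h | h
  · exact h.le
  · exact h.1.le

/-- Let `A` and `B` be the ends of the edge of the Newton polygon of `f * g` on which `p i + q j` is
minimal.  The parts of `A` and `B` in `f` have the same value of `p i + q j`, and are the only ones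
that occur in any splitting of `A` and `B`. -/
lemma edge_split {R : Type*} [CommRing R] [IsDomain R] (f g : MvPolynomial (Fin 2) R)
    (p q r s r' s' : ℤ) (h : p * s - q * r ≠ 0) (h' : p * s' - q * r' ≠ 0) (A B : Fin 2 →₀ ℕ)
    (hA : A ∈ (f * g).support) (hB : B ∈ (f * g).support)
    (hAB : p * A 0 + q * A 1 = p * B 0 + q * B 1)
    (hmin : ∀ w ∈ (f * g).support, p * A 0 + q * A 1 ≤ p * w 0 + q * w 1)
    (hminA : ∀ w ∈ (f * g).support, p * A 0 + q * A 1 = p * w 0 + q * w 1 →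
      r * A 0 + s * A 1 ≤ r * w 0 + s * w 1)
    (hminB : ∀ w ∈ (f * g).support, p * A 0 + q * A 1 = p * w 0 + q * w 1 →
      r' * B 0 + s' * B 1 ≤ r' * w 0 + s' * w 1) :
    ∃ a ∈ f.support, ∃ b ∈ f.support, ∃ a' ∈ g.support, ∃ b' ∈ g.support,
      a + a' = A ∧ b + b' = B ∧ p * a 0 + q * a 1 = p * b 0 + q * b 1 ∧
      (∀ x ∈ f.support, ∀ y ∈ g.support, x + y = A → a = x) ∧
      (∀ x ∈ f.support, ∀ y ∈ g.support, x + y = B → b = x) := by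
  obtain ⟨a, ha, a', ha', haA, hmf, hmg⟩ := exists_vertex_split (lexForm p q r s)
    (lexForm_add p q r s) (lexForm_injective h) f g A hA
    (fun w hw => lexForm_le (hmin w hw) (hminA w hw))
  obtain ⟨b, hb, b', hb', hbB, hmf', hmg'⟩ := exists_vertex_split (lexForm p q r' s')
    (lexForm_add p q r' s') (lexForm_injective h') f g B hB
    (fun w hw => lexForm_le (hAB ▸ hmin w hw) (fun e => hminB w hw (hAB.trans e)))
  refine ⟨a, ha, b, hb, a', ha', b', hb', haA, hbB, ?_, ?_, ?_⟩
  · exact le_antisymm (fst_le_of_lexForm_le (hmf b hb)) (fst_le_of_lexForm_le (hmf' a ha))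
  · intro x hx y hy hxy
    exact vertex_split_unique _ (lexForm_add p q r s) (lexForm_injective h) (f.support : Set _)
      (g.support : Set _) hmf hmg hx hy (haA.trans hxy.symm)
  · intro x hx y hy hxy
    exact vertex_split_unique _ (lexForm_add p q r' s') (lexForm_injective h') (f.support : Set _)
      (g.support : Set _) hmf' hmg' hx hy (hbB.trans hxy.symm)

/-- The three edge relations say that `(x, 0)`, `(0, y)`, `(s, t)` is the multiple by `x / n'` of the
triangle `(n', 0)`, `(0, m)`, `(u, v)`; the gcd condition makes this multiple trivial. -/
lemma triangle_arith {n' m u v x y s t : ℕ} (hn' : 0 < n')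
    (hpos : m * n' < m * u + n' * v) (hgcd : Nat.gcd (Nat.gcd m n') (Nat.gcd u v) = 1)
    (hx : x ≤ n') (h1 : (m : ℤ) * x = n' * y)
    (h2 : (v : ℤ) * x = v * s - (u - n') * t) (h3 : (u : ℤ) * y = u * t - (v - m) * s) :
    (s = u ∧ t = v) ∨ (s = 0 ∧ t = 0) := by
  have hpos' : (m : ℤ) * u + n' * v - m * n' ≠ 0 := by
    have : (m : ℤ) * n' < m * u + n' * v := by exact_mod_cast hpos
    linarith
  have hs : (n' : ℤ) * s = x * u := by
    apply mul_left_cancel₀ hpos'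
    linear_combination (-(n' : ℤ) * u) * h2 - (u - n') * n' * h3 - (u - n') * u * h1
  have ht : (n' : ℤ) * t = x * v := by
    apply mul_left_cancel₀ hpos'
    linear_combination (-(v : ℤ) * n') * h3 - v * u * h1 - n' * (v - m) * h2
  have hs' : n' * s = x * u := by exact_mod_cast hs
  have ht' : n' * t = x * v := by exact_mod_cast ht
  have h1' : m * x = n' * y := by exact_mod_cast h1
  have hdvd : n' ∣ x := by
    have key : n' ∣ x * Nat.gcd (Nat.gcd m n') (Nat.gcd u v) := by
      simp only [← Nat.gcd_mul_left]
      refine Nat.dvd_gcd (Nat.dvd_gcd ⟨y, by rw [mul_comm, h1']⟩ ⟨x, mul_comm _ _⟩)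
        (Nat.dvd_gcd ⟨s, hs'.symm⟩ ⟨t, ht'.symm⟩)
    rwa [hgcd, mul_one] at key
  rcases Nat.eq_zero_or_pos x with h0 | h0
  · right
    subst h0
    simp only [zero_mul, mul_eq_zero] at hs' ht'
    omega
  · left
    have hxn : x = n' := le_antisymm hx (Nat.le_of_dvd h0 hdvd)
    subst hxn
    exact ⟨Nat.eq_of_mul_eq_mul_left h0 hs', Nat.eq_of_mul_eq_mul_left h0 ht'⟩

/-- If the Newton polygon of `f * g` is the triangle with vertices `(n', 0)`, `(0, m)`, `(u, v)` and
`gcd (m, n', u, v) = 1`, then the exponent `(u, v)` occurs in one of the factors. -/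
lemma triangle_top_mem {R : Type*} [CommRing R] [IsDomain R] (f g : MvPolynomial (Fin 2) R)
    (n' m u v : ℕ) (hn' : 0 < n') (hm : 0 < m) (hu : 0 < u) (hv : 0 < v)
    (A B T : Fin 2 →₀ ℕ) (hA0 : A 0 = n') (hA1 : A 1 = 0) (hB0 : B 0 = 0) (hB1 : B 1 = m)
    (hT0 : T 0 = u) (hT1 : T 1 = v)
    (hA : A ∈ (f * g).support) (hB : B ∈ (f * g).support) (hT : T ∈ (f * g).support)
    (hdeg : n' < u + v)
    (hmax : ∀ w ∈ (f * g).support, w ≠ T → w 0 + w 1 < u + v)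
    (hcond : ∀ w ∈ (f * g).support, w ≠ A → w ≠ B → w ≠ T →
        ((m : ℤ) * n' ≤ (m : ℤ) * (w 0 : ℕ) + (n' : ℤ) * (w 1 : ℕ) ∧
         (v : ℤ) * (w 0 : ℕ) - ((u : ℤ) - (n' : ℤ)) * (w 1 : ℕ) ≤ (v : ℤ) * n' ∧
         (u : ℤ) * (w 1 : ℕ) - ((v : ℤ) - (m : ℤ)) * (w 0 : ℕ) ≤ (m : ℤ) * u))
    (hgcd : Nat.gcd (Nat.gcd m n') (Nat.gcd u v) = 1) :
    T ∈ f.support ∨ T ∈ g.support := by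
  have hBT : B ≠ T := by
    rintro rfl
    omega
  have hdeg' : m < u + v := by
    have := hmax B hB hBT
    omega
  -- `(u, v)` lies strictly beyond the line through `(n', 0)` and `(0, m)`
  have hpos : m * n' < m * u + n' * v := by
    rcases le_total m n' with h | h
    · nlinarith
    · nlinarith
  have hposZ : (m : ℤ) * n' < m * u + n' * v := by exact_mod_cast hpos
  have hall : ∀ w ∈ (f * g).support,
        ((m : ℤ) * n' ≤ (m : ℤ) * (w 0 : ℕ) + (n' : ℤ) * (w 1 : ℕ) ∧
         (v : ℤ) * (w 0 : ℕ) - ((u : ℤ) - (n' : ℤ)) * (w 1 : ℕ) ≤ (v : ℤ) * n' ∧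
         (u : ℤ) * (w 1 : ℕ) - ((v : ℤ) - (m : ℤ)) * (w 0 : ℕ) ≤ (m : ℤ) * u) := by
    intro w hw
    by_cases h1 : w = A
    · subst h1
      rw [hA0, hA1]
      push_cast
      refine ⟨?_, ?_, ?_⟩ <;> linarith
    by_cases h2 : w = B
    · subst h2
      rw [hB0, hB1]
      push_cast
      refine ⟨?_, ?_, ?_⟩ <;> linarith
    by_cases h3 : w = T
    · subst h3
      rw [hT0, hT1]
      refine ⟨?_, ?_, ?_⟩ <;> linarith
    exact hcond w hw h1 h2 h3
  have htop : ∀ w ∈ (f * g).support, (w 0 : ℤ) + w 1 ≤ u + v := by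
    intro w hw
    by_cases h3 : w = T
    · subst h3
      rw [hT0, hT1]
    · have := hmax w hw h3
      omega
  have hn'Z : (0 : ℤ) < n' := by exact_mod_cast hn'
  have hmZ : (0 : ℤ) < m := by exact_mod_cast hm
  have huZ : (0 : ℤ) < u := by exact_mod_cast hu
  have hvZ : (0 : ℤ) < v := by exact_mod_cast hv
  have hdegZ : (n' : ℤ) < u + v := by exact_mod_cast hdeg
  have hdegZ' : (m : ℤ) < u + v := by exact_mod_cast hdeg'
  -- the edge from `(n', 0)` to `(0, m)`
  obtain ⟨a, ha, b, hb, a', ha', b', hb', haA, hbB, h1, hua, hub⟩ :=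
    edge_split f g m n' (-1) 0 1 0 (by intro h; linarith) (by intro h; linarith) A B hA hB
      (by rw [hA0, hA1, hB0, hB1]; push_cast; ring)
      (by intro w hw; rw [hA0, hA1]; have := (hall w hw).1; push_cast; linarith)
      (by
        intro w hw e
        rw [hA0, hA1] at e ⊢
        have hj : (0 : ℤ) ≤ n' * (w 1 : ℕ) := by positivity
        have hi : (w 0 : ℤ) ≤ n' := by
          refine le_of_mul_le_mul_left (a := (m : ℤ)) ?_ hmZ
          push_cast at e
          linarith
        push_cast
        linarith)
      (by intro w hw e; rw [hB0, hB1]; push_cast; have := Int.natCast_nonneg (w 0); linarith)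
  -- the edge from `(n', 0)` to `(u, v)`
  obtain ⟨a₂, ha₂, c, hc, a₂', ha₂', c', hc', haA₂, hcT, h2, -, huc⟩ :=
    edge_split f g (-v) (u - n') 0 1 (-1) (-1) (by intro h; linarith) (by intro h; linarith)
      A T hA hT
      (by rw [hA0, hA1, hT0, hT1]; push_cast; ring)
      (by intro w hw; rw [hA0, hA1]; have := (hall w hw).2.1; push_cast; linarith)
      (by intro w hw e; rw [hA0, hA1]; push_cast; have := Int.natCast_nonneg (w 1); linarith)
      (by intro w hw e; rw [hT0, hT1]; have := htop w hw; linarith)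
  -- the edge from `(0, m)` to `(u, v)`
  obtain ⟨b₂, hb₂, c₂, hc₂, b₂', hb₂', c₂', hc₂', hbB₂, hcT₂, h3, -, -⟩ :=
    edge_split f g (v - m) (-u) 1 0 (-1) (-1) (by intro h; linarith) (by intro h; linarith)
      B T hB hT
      (by rw [hB0, hB1, hT0, hT1]; push_cast; ring)
      (by intro w hw; rw [hB0, hB1]; have := (hall w hw).2.2; push_cast; linarith)
      (by intro w hw e; rw [hB0, hB1]; push_cast; have := Int.natCast_nonneg (w 0); linarith)
      (by intro w hw e; rw [hT0, hT1]; have := htop w hw; linarith)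
  obtain rfl := hua a₂ ha₂ a₂' ha₂' haA₂
  obtain rfl := hub b₂ hb₂ b₂' hb₂' hbB₂
  obtain rfl := huc c₂ hc₂ c₂' hc₂' hcT₂
  have ea0 : a 0 + a' 0 = n' := by rw [← hA0, ← haA]; rfl
  have ea1 : a 1 + a' 1 = 0 := by rw [← hA1, ← haA]; rfl
  have eb0 : b 0 + b' 0 = 0 := by rw [← hB0, ← hbB]; rfl
  have ec0 : c 0 + c' 0 = u := by rw [← hT0, ← hcT]; rfl
  have ec1 : c 1 + c' 1 = v := by rw [← hT1, ← hcT]; rfl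
  have za : a 1 = 0 := by omega
  have zb : b 0 = 0 := by omega
  rw [za, zb] at h1
  rw [za] at h2
  rw [zb] at h3
  push_cast at h1 h2 h3
  rcases triangle_arith (x := a 0) (y := b 1) (s := c 0) (t := c 1) hn' hpos hgcd (by omega)
    (by linarith) (by linarith) (by linarith) with h | h
  · left
    have : c = T := by
      ext i
      fin_cases i
      · simp only [Fin.zero_eta]; omega
      · simp only [Fin.mk_one]; omega
    exact this ▸ hc
  · right
    have : c' = T := by
      ext i
      fin_cases i
      · simp only [Fin.zero_eta]; omega
      · simp only [Fin.mk_one]; omega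
    exact this ▸ hc'

/-! ### Adding a polynomial in the remaining variables -/

lemma exists_zero_of_totalDegree_pos {k : ℕ} (q : MvPolynomial (Fin k) ℂ)
    (hq : 0 < q.totalDegree) : ∃ x : Fin k → ℂ, eval x q = 0 := by
  by_contra! h
  have hz : zeroLocus ℂ (Ideal.span {q}) = ∅ := by
    rw [zeroLocus_span]
    ext x
    simpa [aeval_eq_eval] using h x
  have hrad := vanishingIdeal_zeroLocus_eq_radical (K := ℂ) (Ideal.span {q})
  rw [hz, vanishingIdeal_empty, eq_comm, Ideal.radical_eq_top, Ideal.span_singleton_eq_top] at hrad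
  have := (isUnit_iff_totalDegree_of_isReduced.1 hrad).2
  omega

/-- Let `T ≠ 0` be an exponent of maximal degree in `p`.  If in every factorization
of `p` the exponent `T`
occurs in one of the factors, then `p + q` is irreducible for every nonconstant polynomial `q` in
new variables. -/
lemma irreducible_add_of_top_mem {k : ℕ} (p : MvPolynomial (Fin 2) ℂ) (q : MvPolynomial (Fin k) ℂ)
    (hq : 0 < q.totalDegree) (T : Fin 2 →₀ ℕ) (hT : T ∈ p.support) (hT0 : 0 < T.degree)
    (hdeg : p.totalDegree ≤ T.degree)
    (hfac : ∀ f g : MvPolynomial (Fin 2) ℂ, p = f * g → T ∈ f.support ∨ T ∈ g.support) :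
    Irreducible (map (C : ℂ →+* MvPolynomial (Fin k) ℂ) p + C q) := by
  classical
  set P := map (C : ℂ →+* MvPolynomial (Fin k) ℂ) p + C q with hP
  obtain ⟨x, hx⟩ := exists_zero_of_totalDegree_pos q hq
  have hTne : (0 : Fin 2 →₀ ℕ) ≠ T := by
    rintro rfl
    simp at hT0
  have hcoef : coeff T P = C (coeff T p) := by
    rw [hP, coeff_add, coeff_map, coeff_C, if_neg hTne, add_zero]
  have hcoefU : IsUnit (coeff T P) := by
    rw [hcoef]
    exact (isUnit_iff_ne_zero.2 (mem_support_iff.1 hT)).map C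
  have hPdeg : P.totalDegree ≤ T.degree := by
    refine (totalDegree_add _ _).trans (max_le ?_ ?_)
    · exact (Finset.sup_mono (support_map_subset _ _)).trans hdeg
    · simp
  have hspec : map (eval x) P = p := by
    rw [hP, map_add, map_map, map_C, hx, C_0, add_zero]
    convert map_id p
    ext; simp
  have hPne : P ≠ 0 := by
    intro h
    simp [h] at hcoefU
  have key : ∀ F G : MvPolynomial (Fin 2) (MvPolynomial (Fin k) ℂ), P = F * G →
      T ∈ (map (eval x) F).support → IsUnit G := by
    intro F G hFG hTF
    have hTF' : T ∈ F.support := support_map_subset _ _ hTF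
    have hne : F * G ≠ 0 := hFG ▸ hPne
    have hle : T.degree ≤ F.totalDegree := le_totalDegree hTF'
    have hsum : P.totalDegree = F.totalDegree + G.totalDegree := by
      rw [hFG]
      exact totalDegree_mul_of_isDomain (left_ne_zero_of_mul hne) (right_ne_zero_of_mul hne)
    have hG : G = C (coeff 0 G) := totalDegree_eq_zero_iff_eq_C.1 (by omega)
    rw [hFG, hG, mul_comm F, coeff_C_mul, mul_comm] at hcoefU
    rw [hG]
    exact (isUnit_of_mul_isUnit_right hcoefU).map C
  refine ⟨?_, ?_⟩
  · intro hU
    have h0 := (isUnit_iff_totalDegree_of_isReduced.1 hU).2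
    have hle : T.degree ≤ P.totalDegree := le_totalDegree (mem_support_iff.2 hcoefU.ne_zero)
    omega
  · intro F G hFG
    rcases hfac (map (eval x) F) (map (eval x) G) (by rw [← map_mul, ← hFG, hspec]) with h | h
    · exact Or.inr (key F G hFG h)
    · exact Or.inl (key G F (hFG.trans (mul_comm _ _)) h)

/-- Separation of the first two variables: `ℂ[z₁, …, z_{2+k}] = ℂ[z₃, …, z_{2+k}][z₁, z₂]`. -/
lemma irreducible_rename_add {k : ℕ} (p : MvPolynomial (Fin 2) ℂ) (q : MvPolynomial (Fin k) ℂ)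
    (h : Irreducible (map (C : ℂ →+* MvPolynomial (Fin k) ℂ) p + C q)) :
    Irreducible (rename (Fin.castAdd k) p + rename (Fin.natAdd 2) q) := by
  let ψ := (renameEquiv ℂ (finSumFinEquiv (m := 2) (n := k)).symm).trans
    (sumAlgEquiv ℂ (Fin 2) (Fin k))
  have h1 : ψ (rename (Fin.castAdd k) p) = map C p := by
    have e : (finSumFinEquiv (m := 2) (n := k)).symm ∘ Fin.castAdd k = Sum.inl := by
      ext i; simp
    simp only [ψ, AlgEquiv.trans_apply, renameEquiv_apply, rename_rename, e]
    exact DFunLike.congr_fun (sumAlgEquiv_comp_rename_inl ℂ (Fin 2) (Fin k)) p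
  have h2 : ψ (rename (Fin.natAdd 2) q) = C q := by
    have e : (finSumFinEquiv (m := 2) (n := k)).symm ∘ Fin.natAdd 2 = Sum.inr := by
      ext i; simp
    simp only [ψ, AlgEquiv.trans_apply, renameEquiv_apply, rename_rename, e]
    exact DFunLike.congr_fun (sumAlgEquiv_comp_rename_inr ℂ (Fin 2) (Fin k)) q
  rw [← MulEquiv.irreducible_iff ψ, map_add, h1, h2]
  exact h

/-- **Example 1.** Let `P₁ ∈ ℂ[z₁,z₂]` be of the form
`a z₁^{n'} + b z₂^m + c z₁^u z₂^v + Σ c_{ij} z₁^i z₂^j` with `a, b, c ≠ 0`, where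
`u n' + m v ≠ m n'`, `c z₁^u z₂^v` is the unique term of highest total degree
(`u + v > n'`), and every other exponent `(i,j)` with `c_{ij} ≠ 0` satisfies
`m i + n' j ≥ m n'`, `v i − (u − n') j ≤ v n'`, `u j − (v − m) i ≤ m u`.
If `P₂ ∈ ℂ[z₃,…,zₙ]` is nonconstant and `gcd(m, n', u, v) = 1`, then `P₁ + P₂` is
irreducible over `ℂ`. -/
theorem example_triangle_irreducible
    (n : ℕ) (hn : 3 ≤ n) (n' m u v : ℕ)
    (hn' : 0 < n') (hm : 0 < m) (hu : 0 < u) (hv : 0 < v)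
    (P₁ P₂ : MvPolynomial (Fin n) ℂ)
    (hvar1 : ∀ w ∈ P₁.support, ∀ k : Fin n, 2 ≤ (k : ℕ) → w k = 0)
    (ha : MvPolynomial.coeff (Finsupp.single (⟨0, by omega⟩ : Fin n) n') P₁ ≠ 0)
    (hb : MvPolynomial.coeff (Finsupp.single (⟨1, by omega⟩ : Fin n) m) P₁ ≠ 0)
    (hc : MvPolynomial.coeff
      (Finsupp.single (⟨0, by omega⟩ : Fin n) u + Finsupp.single (⟨1, by omega⟩ : Fin n) v)
      P₁ ≠ 0)
    (hslope : u * n' + m * v ≠ m * n')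
    (hdeg : n' < u + v)
    (hmax : ∀ w ∈ P₁.support,
      w ≠ Finsupp.single (⟨0, by omega⟩ : Fin n) u + Finsupp.single (⟨1, by omega⟩ : Fin n) v →
      w ⟨0, by omega⟩ + w ⟨1, by omega⟩ < u + v)
    (hcond : ∀ w ∈ P₁.support,
      w ≠ Finsupp.single (⟨0, by omega⟩ : Fin n) n' →
      w ≠ Finsupp.single (⟨1, by omega⟩ : Fin n) m →
      w ≠ Finsupp.single (⟨0, by omega⟩ : Fin n) u + Finsupp.single (⟨1, by omega⟩ : Fin n) v →
        ((m : ℤ) * n' ≤ (m : ℤ) * (w ⟨0, by omega⟩ : ℕ) + (n' : ℤ) * (w ⟨1, by omega⟩ : ℕ) ∧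
         (v : ℤ) * (w ⟨0, by omega⟩ : ℕ) - ((u : ℤ) - (n' : ℤ)) * (w ⟨1, by omega⟩ : ℕ)
            ≤ (v : ℤ) * n' ∧
         (u : ℤ) * (w ⟨1, by omega⟩ : ℕ) - ((v : ℤ) - (m : ℤ)) * (w ⟨0, by omega⟩ : ℕ)
            ≤ (m : ℤ) * u))
    (hvar2 : ∀ w ∈ P₂.support, ∀ k : Fin n, (k : ℕ) < 2 → w k = 0)
    (hnc2 : 0 < P₂.totalDegree)
    (hgcd : Nat.gcd (Nat.gcd m n') (Nat.gcd u v) = 1) :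
    Irreducible (P₁ + P₂) := by
  obtain ⟨k, rfl⟩ : ∃ k, n = 2 + k := ⟨n - 2, by omega⟩
  have hinj : Function.Injective (Fin.castAdd k : Fin 2 → Fin (2 + k)) := Fin.castAdd_injective 2 k
  have e0 : (⟨0, by omega⟩ : Fin (2 + k)) = Fin.castAdd k (0 : Fin 2) := rfl
  have e1 : (⟨1, by omega⟩ : Fin (2 + k)) = Fin.castAdd k (1 : Fin 2) := rfl
  obtain ⟨p, rfl⟩ : ∃ p, rename (Fin.castAdd k : Fin 2 → Fin (2 + k)) p = P₁ := by
    apply exists_rename_eq_of_vars_subset_range _ _ hinj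
    intro i hi
    obtain ⟨d, hd, hid⟩ := (mem_vars_iff_mem_support i).1 hi
    by_cases h : (i : ℕ) < 2
    · exact ⟨⟨i, h⟩, rfl⟩
    · exact absurd (hvar1 d hd i (by omega)) (Finsupp.mem_support_iff.1 hid)
  obtain ⟨q, rfl⟩ : ∃ q, rename (Fin.natAdd 2 : Fin k → Fin (2 + k)) q = P₂ := by
    apply exists_rename_eq_of_vars_subset_range _ _ (Fin.natAdd_injective k 2)
    intro i hi
    obtain ⟨d, hd, hid⟩ := (mem_vars_iff_mem_support i).1 hi
    by_cases h : (i : ℕ) < 2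
    · exact absurd (hvar2 d hd i h) (Finsupp.mem_support_iff.1 hid)
    · exact ⟨⟨i - 2, by omega⟩, by ext; simp; omega⟩
  have hq : 0 < q.totalDegree := hnc2.trans_le (totalDegree_rename_le _ _)
  have hmapinj := Finsupp.mapDomain_injective (M := ℕ) hinj
  rw [e0] at ha
  rw [e1] at hb
  rw [e0, e1] at hc
  have eA : Finsupp.single (Fin.castAdd k (0 : Fin 2)) n' =
      (Finsupp.single (0 : Fin 2) n').mapDomain (Fin.castAdd k) := by simp
  have eB : Finsupp.single (Fin.castAdd k (1 : Fin 2)) m =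
      (Finsupp.single (1 : Fin 2) m).mapDomain (Fin.castAdd k) := by simp
  have eT : Finsupp.single (Fin.castAdd k (0 : Fin 2)) u + Finsupp.single (Fin.castAdd k 1) v =
      (Finsupp.single (0 : Fin 2) u + Finsupp.single 1 v).mapDomain (Fin.castAdd k) := by
    simp [Finsupp.mapDomain_add]
  simp only [e0, e1, eA, eB, eT] at ha hb hc hmax hcond
  rw [coeff_rename_mapDomain _ hinj, ← mem_support_iff] at ha hb hc
  have hmax' : ∀ w ∈ p.support, w ≠ Finsupp.single 0 u + Finsupp.single 1 v →
      w 0 + w 1 < u + v := by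
    intro w hw hne
    have := hmax (w.mapDomain (Fin.castAdd k))
      (by rwa [mem_support_iff, coeff_rename_mapDomain _ hinj, ← mem_support_iff])
      (hmapinj.ne hne)
    rwa [Finsupp.mapDomain_apply hinj, Finsupp.mapDomain_apply hinj] at this
  apply irreducible_rename_add
  refine irreducible_add_of_top_mem p q hq (Finsupp.single 0 u + Finsupp.single 1 v) hc ?_ ?_ ?_
  · simp [hu]
  · refine Finset.sup_le fun w hw => ?_
    by_cases h : w = Finsupp.single 0 u + Finsupp.single 1 v
    · rw [h]; rfl
    · have := hmax' w hw h
      change w.degree ≤ _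
      simp [Finsupp.degree_eq_sum, Fin.sum_univ_two]
      omega
  · rintro f g rfl
    refine triangle_top_mem f g n' m u v hn' hm hu hv (Finsupp.single 0 n') (Finsupp.single 1 m)
      (Finsupp.single 0 u + Finsupp.single 1 v) (by simp) (by simp) (by simp) (by simp)
      (by simp) (by simp) ha hb hc hdeg hmax' ?_ hgcd
    intro w hw h1 h2 h3
    have := hcond (w.mapDomain (Fin.castAdd k))
      (by rwa [mem_support_iff, coeff_rename_mapDomain _ hinj, ← mem_support_iff])
      (hmapinj.ne h1) (hmapinj.ne h2) (hmapinj.ne h3)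
    rwa [Finsupp.mapDomain_apply hinj, Finsupp.mapDomain_apply hinj] at this
end

section
/- Let n ≥ 3 and 2 ≤ ν ≤ n−1. Let P ∈ ℂ[z₁,…,zₙ] be a polynomial that can be written as P = P₁ + P₂, where P₁ = Q₁ + Q₂ with Q₁ ∈ ℂ[z₁] a nonconstant polynomial of degree r and Q₂ ∈ ℂ[z₂,…,z_ν] a nonconstant polynomial of degree m, and P₂ ∈ ℂ[z_{ν+1},…,zₙ] is any nonconstant polynomial. If gcd(r, m) = 1, then P is irreducible over ℂ. -/
/-!
The proof compares degrees only. For every weight `w : σ → ℕ` the weighted total degree is additive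
on products of nonzero polynomials over a domain (`weightedTotalDegree_mul_of_ne_zero`). Give the blocks of variables
`z₁`, `z₂,…,z_ν` and `z_{ν+1},…,zₙ` constant weights `a`, `b`, `c`: since the three summands of `P`
share no variable, the weighted degree of `P` is `max (a r) (b m) (c p)`, where `p` is the degree of
`P₂` (`weightedTotalDegree_blocks`).

Let `P = G H`. For the weights `(m, r, 0)` the degree of `P` is `r m`, while that of each factor
is at least `m` times its degree in the first block and at least `r` times its degree in the second.
These lower bounds add up to `r m` over the two factors, so all of them are equalities and
`m * deg₁ G = r * deg₂ G`. As `gcd r m = 1`, this forces `deg₁ G = 0` or `deg₁ G = r`, that is,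
one of the factors has degree `0` in `z₁` (`deg_first_eq_zero_or`). The same weights show that
this factor has degree `0` in the second block, and the weights `(p, 0, 1)`, for which `P` has
degree `p r`, show that it has degree `0` in the third; so it is a constant
(`isUnit_of_deg_first_eq_zero`).
-/

open MvPolynomial

/-! ### Weighted total degree over a domain and over disjoint blocks of variables -/

section WeightedDegree

variable {σ : Type*} {R : Type*} [CommRing R]

lemma exists_mem_support_weight_eq (w : σ → ℕ) {G : MvPolynomial σ R} (hG : G ≠ 0) :
    ∃ s ∈ G.support, Finsupp.weight w s = weightedTotalDegree w G := by
  obtain ⟨s, hs, h⟩ := Finset.exists_mem_eq_sup G.support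
    (Finset.nonempty_iff_ne_empty.mpr (by simpa using hG)) (fun s => Finsupp.weight w s)
  exact ⟨s, hs, h.symm⟩

lemma weightedTotalDegree_mul_of_ne_zero [IsDomain R] (w : σ → ℕ) {G H : MvPolynomial σ R}
    (hG : G ≠ 0) (hH : H ≠ 0) :
    weightedTotalDegree w (G * H) = weightedTotalDegree w G + weightedTotalDegree w H := by
  classical
  set d := weightedTotalDegree w G with hd
  set e := weightedTotalDegree w H with he
  have hGle : ∀ s, coeff s G ≠ 0 → Finsupp.weight w s ≤ d := fun s hs =>
    le_weightedTotalDegree w (mem_support_iff.mpr hs)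
  have hHle : ∀ s, coeff s H ≠ 0 → Finsupp.weight w s ≤ e := fun s hs =>
    le_weightedTotalDegree w (mem_support_iff.mpr hs)
  apply le_antisymm
  · refine Finset.sup_le fun s hs => ?_
    obtain ⟨a, ha, b, hb, rfl⟩ := Finset.mem_add.mp (support_mul G H hs)
    rw [map_add]
    exact add_le_add (hGle a (mem_support_iff.mp ha)) (hHle b (mem_support_iff.mp hb))
  · -- The product of the leading forms is nonzero, and any of its monomials survives in `G * H`.
    set g := weightedHomogeneousComponent w d G with hg
    set h := weightedHomogeneousComponent w e H with hh
    have hg0 : g ≠ 0 := by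
      obtain ⟨s, hs, hsd⟩ := exists_mem_support_weight_eq w hG
      refine ne_zero_iff.mpr ⟨s, ?_⟩
      rw [hg, coeff_weightedHomogeneousComponent, if_pos hsd]
      exact mem_support_iff.mp hs
    have hh0 : h ≠ 0 := by
      obtain ⟨s, hs, hsd⟩ := exists_mem_support_weight_eq w hH
      refine ne_zero_iff.mpr ⟨s, ?_⟩
      rw [hh, coeff_weightedHomogeneousComponent, if_pos hsd]
      exact mem_support_iff.mp hs
    obtain ⟨s, hs⟩ := ne_zero_iff.mp (mul_ne_zero hg0 hh0)
    have hsw : Finsupp.weight w s = d + e :=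
      ((weightedHomogeneousComponent_isWeightedHomogeneous d G).mul
        (weightedHomogeneousComponent_isWeightedHomogeneous e H)) hs
    have key : coeff s (G * H) = coeff s (g * h) := by
      rw [coeff_mul, coeff_mul]
      refine Finset.sum_congr rfl fun x hx => ?_
      have hxw : Finsupp.weight w x.1 + Finsupp.weight w x.2 = d + e := by
        rw [← map_add, Finset.HasAntidiagonal.mem_antidiagonal.mp hx, hsw]
      rw [hg, hh, coeff_weightedHomogeneousComponent, coeff_weightedHomogeneousComponent]
      by_cases h1 : coeff x.1 G = 0
      · simp [h1]
      by_cases h2 : coeff x.2 H = 0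
      · simp [h2]
      have := hGle _ h1
      have := hHle _ h2
      rw [if_pos (by omega), if_pos (by omega)]
    rw [← hsw]
    exact le_weightedTotalDegree w (mem_support_iff.mpr (key ▸ hs))

lemma mul_weightedTotalDegree_le (c : ℕ) (w w' : σ → ℕ) (h : ∀ i, c * w i ≤ w' i)
    (G : MvPolynomial σ R) : c * weightedTotalDegree w G ≤ weightedTotalDegree w' G := by
  rcases eq_or_ne G 0 with rfl | hG
  · simp [weightedTotalDegree_zero]
  obtain ⟨s, hs, hsd⟩ := exists_mem_support_weight_eq w hG
  rw [← hsd]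
  refine le_trans ?_ (le_weightedTotalDegree w' hs)
  rw [Finsupp.weight_apply, Finsupp.weight_apply, Finsupp.sum, Finsupp.sum, Finset.mul_sum]
  refine Finset.sum_le_sum fun i _ => ?_
  have := Nat.mul_le_mul_left (s i) (h i)
  simp only [smul_eq_mul]
  linarith [mul_left_comm c (s i) (w i)]

/-- The weighted degree of a sum of nonconstant polynomials in pairwise disjoint blocks of
variables, for a weight that is constant on each block. The blocks are the fibres of `κ`. -/
lemma weightedTotalDegree_blocks {ι : Type*} [Fintype ι] (κ : σ → ι)
    (Q : ι → MvPolynomial σ R)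
    (hQ : ∀ j, ∀ s ∈ (Q j).support, ∀ i, κ i ≠ j → s i = 0)
    (hpos : ∀ j, 0 < (Q j).totalDegree) (u : ι → ℕ) :
    weightedTotalDegree (u ∘ κ) (∑ j, Q j)
      = Finset.univ.sup fun j => u j * (Q j).totalDegree := by
  classical
  have hw : ∀ j, ∀ s ∈ (Q j).support,
      Finsupp.weight (u ∘ κ) s = u j * s.sum fun _ e => e := by
    intro j s hs
    rw [Finsupp.weight_apply, Finsupp.sum, Finsupp.sum, Finset.mul_sum]
    refine Finset.sum_congr rfl fun i hi => ?_
    have : κ i = j := by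
      by_contra hne
      exact Finsupp.mem_support_iff.mp hi (hQ j s hs i hne)
    simp [this, mul_comm]
  apply le_antisymm
  · refine Finset.sup_le fun s hs => ?_
    obtain ⟨j, -, hj⟩ : ∃ j ∈ Finset.univ, coeff s (Q j) ≠ 0 := by
      apply Finset.exists_ne_zero_of_sum_ne_zero
      rw [← coeff_sum]
      exact mem_support_iff.mp hs
    have hj' := mem_support_iff.mpr hj
    rw [hw j s hj']
    exact (Nat.mul_le_mul_left _ (le_totalDegree hj')).trans
      (Finset.le_sup (f := fun j => u j * (Q j).totalDegree) (Finset.mem_univ j))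
  · refine Finset.sup_le fun j _ => ?_
    have hne : (Q j).support.Nonempty := by
      rw [Finset.nonempty_iff_ne_empty]
      intro h0
      have := hpos j
      simp [totalDegree, h0] at this
    obtain ⟨s, hs, hsd⟩ := Finset.exists_mem_eq_sup (Q j).support hne
      (fun s => s.sum fun _ e => e)
    change (Q j).totalDegree = _ at hsd
    -- A top-degree monomial of `Q j` is nonconstant, so no other block contains it.
    have hother : ∀ k ≠ j, coeff s (Q k) = 0 := by
      intro k hk
      by_contra hc
      have hs0 : s = 0 := by
        ext i
        by_cases hi : κ i = j
        · exact hQ k s (mem_support_iff.mpr hc) i (by rw [hi]; exact hk.symm)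
        · exact hQ j s hs i hi
      have := hpos j
      rw [hsd, hs0] at this
      simp at this
    have hmem : s ∈ (∑ j, Q j).support := by
      rw [mem_support_iff, coeff_sum,
        Finset.sum_eq_single j (fun k _ hk => hother k hk) (by simp)]
      exact mem_support_iff.mp hs
    have h := le_weightedTotalDegree (u ∘ κ) hmem
    rwa [hw j s hs, ← hsd] at h

end WeightedDegree

/-! ### Sums of polynomials in three disjoint blocks of variables -/

section ThreeBlocks

variable {σ : Type*} (κ : σ → Fin 3) {Q : Fin 3 → MvPolynomial σ ℂ}

/-- One factor has degree `0` in the first block: for the weights `(m, r, 0)` the lower bounds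
`m * deg₁` and `r * deg₂` for the degrees of the two factors are attained, so `r ∣ m * deg₁ G`. -/
lemma deg_first_eq_zero_or
    (hQ : ∀ j, ∀ s ∈ (Q j).support, ∀ i, κ i ≠ j → s i = 0)
    (hpos : ∀ j, 0 < (Q j).totalDegree)
    (hgcd : Nat.gcd (Q 0).totalDegree (Q 1).totalDegree = 1)
    {G H : MvPolynomial σ ℂ} (hG : G ≠ 0) (hH : H ≠ 0) (hP : ∑ j, Q j = G * H) :
    weightedTotalDegree (![1, 0, 0] ∘ κ) G = 0 ∨ weightedTotalDegree (![1, 0, 0] ∘ κ) H = 0 := by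
  have hD := weightedTotalDegree_blocks κ Q hQ hpos
  set r := (Q 0).totalDegree
  set m := (Q 1).totalDegree
  have hx := hD ![1, 0, 0]
  have hy := hD ![0, 1, 0]
  have hw := hD ![m, r, 0]
  rw [hP, weightedTotalDegree_mul_of_ne_zero _ hG hH, Fin.univ_succ] at hx hy hw
  simp [Fin.univ_succ] at hx hy hw
  have hle1 (F : MvPolynomial σ ℂ) : m * weightedTotalDegree (![1, 0, 0] ∘ κ) F
      ≤ weightedTotalDegree (![m, r, 0] ∘ κ) F :=
    mul_weightedTotalDegree_le m _ _ (fun i => by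
      simp only [Function.comp]; generalize κ i = k; fin_cases k <;> simp) F
  have hle2 (F : MvPolynomial σ ℂ) : r * weightedTotalDegree (![0, 1, 0] ∘ κ) F
      ≤ weightedTotalDegree (![m, r, 0] ∘ κ) F :=
    mul_weightedTotalDegree_le r _ _ (fun i => by
      simp only [Function.comp]; generalize κ i = k; fin_cases k <;> simp) F
  have h1 := hle1 G
  have h2 := hle1 H
  have h3 := hle2 G
  have h4 := hle2 H
  generalize weightedTotalDegree (![1, 0, 0] ∘ κ) G = x at *
  generalize weightedTotalDegree (![1, 0, 0] ∘ κ) H = x' at *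
  generalize weightedTotalDegree (![0, 1, 0] ∘ κ) G = y at *
  generalize weightedTotalDegree (![0, 1, 0] ∘ κ) H = y' at *
  have hw' : weightedTotalDegree (![m, r, 0] ∘ κ) G + weightedTotalDegree (![m, r, 0] ∘ κ) H
      = r * m := by
    rw [hw]
    change max (m * r) (r * m) = r * m
    rw [mul_comm m r, max_self]
  have e1 : m * x + m * x' = r * m := by rw [← mul_add, hx, mul_comm]
  have e2 : r * y + r * y' = r * m := by rw [← mul_add, hy]
  have e3 : m * x = r * y := by omega
  have hdvd : r ∣ x := (Nat.Coprime.dvd_mul_left hgcd).mp ⟨y, e3⟩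
  rcases Nat.eq_zero_or_pos x with h0 | h0
  · exact Or.inl h0
  · have := Nat.le_of_dvd h0 hdvd
    right
    omega

/-- If `G` has degree `0` in the first block, then `H` alone accounts for the degree of the product
for the weights `(m, r, 0)` and `(p, 0, 1)`, so `G` has degree `0` for these as well. -/
lemma isUnit_of_deg_first_eq_zero
    (hQ : ∀ j, ∀ s ∈ (Q j).support, ∀ i, κ i ≠ j → s i = 0)
    (hpos : ∀ j, 0 < (Q j).totalDegree)
    {G H : MvPolynomial σ ℂ} (hG : G ≠ 0) (hH : H ≠ 0) (hP : ∑ j, Q j = G * H)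
    (h0 : weightedTotalDegree (![1, 0, 0] ∘ κ) G = 0) : IsUnit G := by
  have hD := weightedTotalDegree_blocks κ Q hQ hpos
  have hr := hpos 0
  set r := (Q 0).totalDegree
  set m := (Q 1).totalDegree
  set p := (Q 2).totalDegree
  have hx := hD ![1, 0, 0]
  have hw := hD ![m, r, 0]
  have hu := hD ![p, 0, 1]
  rw [hP, weightedTotalDegree_mul_of_ne_zero _ hG hH, Fin.univ_succ] at hx hw hu
  simp [Fin.univ_succ] at hx hw hu
  have hw' : weightedTotalDegree (![m, r, 0] ∘ κ) G + weightedTotalDegree (![m, r, 0] ∘ κ) H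
      = m * r := by
    rw [hw]
    change max (m * r) (r * m) = m * r
    rw [mul_comm m r, max_self]
  have hu' : weightedTotalDegree (![p, 0, 1] ∘ κ) G + weightedTotalDegree (![p, 0, 1] ∘ κ) H
      = p * r := by
    rw [hu]
    exact max_eq_left (Nat.le_mul_of_pos_right p hr)
  have hxH : weightedTotalDegree (![1, 0, 0] ∘ κ) H = r := by omega
  have l1 : m * weightedTotalDegree (![1, 0, 0] ∘ κ) H ≤ weightedTotalDegree (![m, r, 0] ∘ κ) H :=
    mul_weightedTotalDegree_le m _ _ (fun i => by
      simp only [Function.comp]; generalize κ i = k; fin_cases k <;> simp) H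
  have l2 : p * weightedTotalDegree (![1, 0, 0] ∘ κ) H ≤ weightedTotalDegree (![p, 0, 1] ∘ κ) H :=
    mul_weightedTotalDegree_le p _ _ (fun i => by
      simp only [Function.comp]; generalize κ i = k; fin_cases k <;> simp) H
  rw [hxH] at l1 l2
  have z1 : weightedTotalDegree (![m, r, 0] ∘ κ) G = 0 := by omega
  have z2 : weightedTotalDegree (![p, 0, 1] ∘ κ) G = 0 := by omega
  -- Every variable has positive weight in one of the three weightings for which `G` has degree `0`.
  have hs0 : ∀ s ∈ G.support, s = 0 := by
    intro s hs
    have t0 := le_weightedTotalDegree (![1, 0, 0] ∘ κ) hs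
    have t1 := le_weightedTotalDegree (![m, r, 0] ∘ κ) hs
    have t2 := le_weightedTotalDegree (![p, 0, 1] ∘ κ) hs
    rw [h0] at t0
    rw [z1] at t1
    rw [z2] at t2
    ext i
    have hle (v : Fin 3 → ℕ) (hv : v (κ i) ≠ 0) (ht : Finsupp.weight (v ∘ κ) s ≤ 0) : s i = 0 :=
      Nat.le_zero.mp ((Finsupp.le_weight (v ∘ κ) hv s).trans ht)
    have h3 : κ i = 0 ∨ κ i = 1 ∨ κ i = 2 := by
      generalize κ i = k
      fin_cases k <;> simp
    rcases h3 with h | h | h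
    · exact hle _ (by simp [h]) t0
    · exact hle _ (by simp [h, hr.ne']) t1
    · exact hle _ (by simp [h]) t2
  have htd : G.totalDegree = 0 := by
    refine Nat.le_zero.mp (Finset.sup_le fun s hs => ?_)
    simp [hs0 s hs]
  have hC := totalDegree_eq_zero_iff_eq_C.mp htd
  rw [hC]
  refine IsUnit.map C (isUnit_iff_ne_zero.mpr fun hc => hG ?_)
  rw [hC, hc, C_0]

lemma irreducible_of_blocks
    (hQ : ∀ j, ∀ s ∈ (Q j).support, ∀ i, κ i ≠ j → s i = 0)
    (hpos : ∀ j, 0 < (Q j).totalDegree)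
    (hgcd : Nat.gcd (Q 0).totalDegree (Q 1).totalDegree = 1) :
    Irreducible (∑ j, Q j) := by
  classical
  have hdeg : 0 < weightedTotalDegree (![1, 0, 0] ∘ κ) (∑ j, Q j) := by
    rw [weightedTotalDegree_blocks κ Q hQ hpos]
    simpa [Fin.univ_succ] using hpos 0
  have hP0 : ∑ j, Q j ≠ 0 := by
    intro h
    rw [h, weightedTotalDegree_zero] at hdeg
    exact lt_irrefl _ hdeg
  refine ⟨fun hu => ?_, fun G H hP => ?_⟩
  · obtain ⟨c, -, hc⟩ := isUnit_iff_eq_C_of_isReduced.mp hu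
    have : weightedTotalDegree (![1, 0, 0] ∘ κ) (C c : MvPolynomial σ ℂ) ≤ 0 := by
      refine Finset.sup_le fun s hs => ?_
      have : s = 0 := by
        by_contra hne
        rw [mem_support_iff, coeff_C, if_neg (Ne.symm hne)] at hs
        exact hs rfl
      simp [this]
    rw [hc] at hdeg
    omega
  · have hG : G ≠ 0 := by
      rintro rfl
      exact hP0 (by rw [hP, zero_mul])
    have hH : H ≠ 0 := by
      rintro rfl
      exact hP0 (by rw [hP, mul_zero])
    rcases deg_first_eq_zero_or κ hQ hpos hgcd hG hH hP with h | h
    · exact Or.inl (isUnit_of_deg_first_eq_zero κ hQ hpos hG hH hP h)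
    · exact Or.inr (isUnit_of_deg_first_eq_zero κ hQ hpos hH hG (hP.trans (mul_comm G H)) h)

end ThreeBlocks


/-- **Example 2.** Let `P = P₁ + P₂` where `P₁ = Q₁ + Q₂`, `Q₁ ∈ ℂ[z₁]` nonconstant of
degree `r`, `Q₂ ∈ ℂ[z₂,…,z_ν]` nonconstant of degree `m`, and `P₂ ∈ ℂ[z_{ν+1},…,zₙ]`
any nonconstant polynomial. If `gcd(r, m) = 1` then `P` is irreducible over `ℂ`. -/
theorem example_split_first_variable_irreducible
    (n ν : ℕ) (hn : 3 ≤ n) (hν1 : 2 ≤ ν) (hν2 : ν ≤ n - 1)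
    (P P₁ P₂ Q₁ Q₂ : MvPolynomial (Fin n) ℂ)
    (hsum : P = P₁ + P₂) (hP1 : P₁ = Q₁ + Q₂)
    (hQ1var : ∀ w ∈ Q₁.support, ∀ i : Fin n, 1 ≤ (i : ℕ) → w i = 0)
    (hQ2var : ∀ w ∈ Q₂.support, ∀ i : Fin n, ((i : ℕ) = 0 ∨ ν ≤ (i : ℕ)) → w i = 0)
    (hP2var : ∀ w ∈ P₂.support, ∀ i : Fin n, (i : ℕ) < ν → w i = 0)
    (r m : ℕ) (hr : r = Q₁.totalDegree) (hm : m = Q₂.totalDegree)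
    (hncQ1 : 0 < Q₁.totalDegree) (hncQ2 : 0 < Q₂.totalDegree) (hncP2 : 0 < P₂.totalDegree)
    (hgcd : Nat.gcd r m = 1) :
    Irreducible P := by
  subst hr hm
  have h := irreducible_of_blocks
    (fun i : Fin n => if (i : ℕ) = 0 then (0 : Fin 3) else if (i : ℕ) < ν then 1 else 2)
    (Q := ![Q₁, Q₂, P₂]) ?_ ?_ hgcd
  · rw [hsum, hP1]
    simpa [Fin.sum_univ_three] using h
  · intro j s hs i hi
    fin_cases j
    · refine hQ1var s hs i ?_
      by_contra hc
      exact hi (if_pos (by omega))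
    · refine hQ2var s hs i ?_
      by_contra hc
      push Not at hc
      exact hi (by simp [hc.1, hc.2])
    · refine hP2var s hs i ?_
      by_contra hc
      have h0 : (i : ℕ) ≠ 0 := by omega
      exact hi (by simp [h0, hc])
  · intro j
    fin_cases j
    exacts [hncQ1, hncQ2, hncP2]
end
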